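/- arXiv:2406.13293 — 3 statements merged into one kernel-verified Lean document; each statement's English description precedes it below -/
import Mathlib

section
/- (i) If (K,c) ∈ D₁, then f has exactly three zeros u₁ < u₀ < u₂ in (0,∞), with f > 0 on (u₁,u₀) ∪ (u₂,∞), f < 0 on (0,u₁) ∪ (u₀,u₂), f'(u₁) > 0, f'(u₂) > 0, and f'(u₀) < 0. (ii) If (K,c) ∈ D₂, then f has exactly two zeros u₀ < u₂ in (0,∞), with f > 0 on (0,u₀) ∪ (u₂,∞), f < 0 on (u₀,u₂), f'(u₂) > 0, f'(u₀) < 0; moreover f(0) = 0 and f'(0) > 0 when K₀ < K < K₁ and c = c₀, while f(0) > 0 when 0 < K < K₁ and c_m(K) < c < c₀. -/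
open Set Filter MeasureTheory

noncomputable section

namespace TrafficTW

/-- `f(u) = (K u - V(u) - c)/K`. -/
def fTV (V : ℝ → ℝ) (K c u : ℝ) : ℝ := (K * u - V u - c) / K

/-- `f'(u) = (K - V'(u))/K`. -/
def fdTV (V' : ℝ → ℝ) (K u : ℝ) : ℝ := (K - V' u) / K

/-- `h(u,μ) = f'(u) + μ`. -/
def hTV (V' : ℝ → ℝ) (K μ u : ℝ) : ℝ := fdTV V' K u + μ

/-- `g₁(u) = 1/(τ κ(1/u))`. -/
def g1TV (κ : ℝ → ℝ) (τ u : ℝ) : ℝ := 1 / (τ * κ (1 / u))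

/-- `g₂(u) = u/(2 τ κ(1/u))`. -/
def g2TV (κ : ℝ → ℝ) (τ u : ℝ) : ℝ := u / (2 * τ * κ (1 / u))

/-- The traveling-wave system (TV): `u' = w`, `w' = g₁ f + g₂ h w`. -/
def IsTVSol (V V' κ : ℝ → ℝ) (τ K c μ : ℝ) (u w : ℝ → ℝ) : Prop :=
  (∀ z, HasDerivAt u (w z) z) ∧
  (∀ z, HasDerivAt w
    (g1TV κ τ (u z) * fTV V K c (u z) + g2TV κ τ (u z) * hTV V' K μ (u z) * w z) z)

/-- Assumption (A1), where `V'` and `V''` are the first and second derivatives of `V`. -/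
def A1 (V V' V'' : ℝ → ℝ) (UM : ℝ) : Prop :=
  (∀ u ∈ Ici (0:ℝ), HasDerivWithinAt V (V' u) (Ici 0) u) ∧
  ContinuousOn V' (Ici 0) ∧
  (∀ u ∈ Ioi (0:ℝ), HasDerivAt V' (V'' u) u) ∧
  ContinuousOn V'' (Ioi 0) ∧
  (∀ u, 0 < u → 0 < V' u) ∧ (∃ M, ∀ u, 0 < u → V' u ≤ M) ∧
  Tendsto V' atTop (nhds 0) ∧
  0 < UM ∧ (∀ u, 0 < u → V' u ≤ V' UM) ∧
  (∀ u, 0 < u → (V'' u = 0 ↔ u = UM))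

/-- Assumption (A2). -/
def A2 (κ : ℝ → ℝ) : Prop :=
  ContDiffOn ℝ 1 κ (Ioi 0) ∧ ∀ ρ, 0 < ρ → 0 < κ ρ

/-- `c₀ = -V(0)`. -/
def c0v (V : ℝ → ℝ) : ℝ := - V 0

/-- `c_M(K) = K u_M(K) - V(u_M(K))`, where `uMx` is the function `K ↦ u_M(K)`. -/
def cMf (V : ℝ → ℝ) (uMx : ℝ → ℝ) (K : ℝ) : ℝ := K * uMx K - V (uMx K)

/-- `c_m(K) = K u_m(K) - V(u_m(K))`, where `umx` is the function `K ↦ u_m(K)`. -/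
def cmf (V : ℝ → ℝ) (umx : ℝ → ℝ) (K : ℝ) : ℝ := K * umx K - V (umx K)

/-- `c₁(K) = max (c₀, c_m(K))`. -/
def c1f (V : ℝ → ℝ) (umx : ℝ → ℝ) (K : ℝ) : ℝ := max (c0v V) (cmf V umx K)

/-- `uMx K = u_M(K)` is the unique local maximum point of `u ↦ K u - V(u)`, characterized
by `u_M(K) ∈ (0, U_M)` and `V'(u_M(K)) = K`, for `K ∈ (K₀, K_M)`. -/
def UMaxHyp (V' : ℝ → ℝ) (UM : ℝ) (uMx : ℝ → ℝ) : Prop :=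
  ∀ K, V' 0 < K → K < V' UM → uMx K ∈ Ioo 0 UM ∧ V' (uMx K) = K

/-- `umx K = u_m(K)` is the unique local minimum point of `u ↦ K u - V(u)`, characterized
by `u_m(K) ∈ (U_M, ∞)` and `V'(u_m(K)) = K`, for `K ∈ (0, K_M)`. -/
def UMinHyp (V' : ℝ → ℝ) (UM : ℝ) (umx : ℝ → ℝ) : Prop :=
  ∀ K, 0 < K → K < V' UM → UM < umx K ∧ V' (umx K) = K

/-- Characterization of `K₁ ∈ (K₀, K_M)`: `c_m(K) < c₀` for `K < K₁` and `c_m(K) > c₀`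
for `K > K₁`. -/
def K1Hyp (V V' : ℝ → ℝ) (UM : ℝ) (umx : ℝ → ℝ) (K₁ : ℝ) : Prop :=
  V' 0 < K₁ ∧ K₁ < V' UM ∧
  (∀ K, 0 < K → K < K₁ → cmf V umx K < c0v V) ∧
  cmf V umx K₁ = c0v V ∧
  (∀ K, K₁ < K → K < V' UM → c0v V < cmf V umx K)

/-- The parameter region `D₁`. -/
def D1 (V V' : ℝ → ℝ) (UM : ℝ) (uMx umx : ℝ → ℝ) : Set (ℝ × ℝ) :=
  {p | V' 0 < p.1 ∧ p.1 < V' UM ∧ c1f V umx p.1 < p.2 ∧ p.2 < cMf V uMx p.1}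

/-- The parameter region `D₂`. -/
def D2 (V V' : ℝ → ℝ) (umx : ℝ → ℝ) (K₁ : ℝ) : Set (ℝ × ℝ) :=
  {p | (V' 0 < p.1 ∧ p.1 < K₁ ∧ p.2 = c0v V) ∨
       (0 < p.1 ∧ p.1 < K₁ ∧ cmf V umx p.1 < p.2 ∧ p.2 < c0v V)}

/-- For `(K,c) ∈ D₁`: `u₁ < u₀ < u₂` are the exactly three positive zeros of `f`. -/
def ZerosD1 (V : ℝ → ℝ) (K c u1 u0 u2 : ℝ) : Prop :=
  0 < u1 ∧ u1 < u0 ∧ u0 < u2 ∧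
  fTV V K c u1 = 0 ∧ fTV V K c u0 = 0 ∧ fTV V K c u2 = 0 ∧
  ∀ u, 0 < u → fTV V K c u = 0 → u = u1 ∨ u = u0 ∨ u = u2

/-- For `(K,c) ∈ D₂`: `u₀ < u₂` are the exactly two positive zeros of `f`. -/
def ZerosD2 (V : ℝ → ℝ) (K c u0 u2 : ℝ) : Prop :=
  0 < u0 ∧ u0 < u2 ∧ fTV V K c u0 = 0 ∧ fTV V K c u2 = 0 ∧
  ∀ u, 0 < u → fTV V K c u = 0 → u = u0 ∨ u = u2

/-- Condition (HE1). -/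
def HE1 (u1 u2 : ℝ) (u w : ℝ → ℝ) : Prop :=
  Tendsto u atBot (nhds u1) ∧ Tendsto u atTop (nhds u2) ∧
  Tendsto w atBot (nhds 0) ∧ Tendsto w atTop (nhds 0) ∧ ∀ z, 0 < w z

/-- Condition (HE2). -/
def HE2 (u1 u2 : ℝ) (u w : ℝ → ℝ) : Prop :=
  Tendsto u atBot (nhds u2) ∧ Tendsto u atTop (nhds u1) ∧
  Tendsto w atBot (nhds 0) ∧ Tendsto w atTop (nhds 0) ∧ ∀ z, w z < 0

/-- Condition (HO) with level `ub`. -/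
def HO (ub : ℝ) (u w : ℝ → ℝ) : Prop :=
  Tendsto u atBot (nhds ub) ∧ Tendsto u atTop (nhds ub) ∧
  Tendsto w atBot (nhds 0) ∧ Tendsto w atTop (nhds 0) ∧
  ¬ (∀ z, u z = ub ∧ w z = 0)

/-- (TV) with parameter `μ` has a positive solution satisfying (HE1). -/
def HasHE1 (V V' κ : ℝ → ℝ) (τ K c μ u1 u2 : ℝ) : Prop :=
  ∃ u w : ℝ → ℝ, IsTVSol V V' κ τ K c μ u w ∧ (∀ z, 0 < u z) ∧ HE1 u1 u2 u w

/-- (TV) with parameter `μ` has a positive solution satisfying (HE2). -/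
def HasHE2 (V V' κ : ℝ → ℝ) (τ K c μ u1 u2 : ℝ) : Prop :=
  ∃ u w : ℝ → ℝ, IsTVSol V V' κ τ K c μ u w ∧ (∀ z, 0 < u z) ∧ HE2 u1 u2 u w

/-- (TV) with parameter `μ` has a positive solution satisfying (HO) with level `ub`. -/
def HasHO (V V' κ : ℝ → ℝ) (τ K c μ ub : ℝ) : Prop :=
  ∃ u w : ℝ → ℝ, IsTVSol V V' κ τ K c μ u w ∧ (∀ z, 0 < u z) ∧ HO ub u w

/-- Condition (H): `∫₁^∞ dρ/(ρ³ κ(ρ)) = ∞`. -/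
def CondH (κ : ℝ → ℝ) : Prop :=
  ¬ IntegrableOn (fun ρ => 1 / (ρ ^ 3 * κ ρ)) (Ioi 1)

/-- Condition (C). -/
def CondC (V' κ : ℝ → ℝ) (UM K₁ K : ℝ) : Prop :=
  (K₁ < K ∧ K < V' UM) ∨ (CondH κ ∧ V' 0 < K ∧ K ≤ K₁)

/-- Periodic solution. -/
def IsPeriodicSol (u w : ℝ → ℝ) : Prop :=
  ∃ Z, 0 < Z ∧ ∀ z, u (z + Z) = u z ∧ w (z + Z) = w z

/-- Nonconstant pair of functions. -/
def Nonconst (u w : ℝ → ℝ) : Prop := ∃ z, u z ≠ u 0 ∨ w z ≠ w 0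

/-- Discriminant of the Jacobian at an equilibrium `(u,0)`. -/
def discTV (V' κ : ℝ → ℝ) (τ K u μ : ℝ) : ℝ :=
  (g2TV κ τ u) ^ 2 * (hTV V' K μ u) ^ 2 + 4 * g1TV κ τ u * fdTV V' K u

/-- The eigenvalue `λ₊(u)`. -/
def lamP (V' κ : ℝ → ℝ) (τ K u μ : ℝ) : ℝ :=
  (g2TV κ τ u * hTV V' K μ u + Real.sqrt (discTV V' κ τ K u μ)) / 2

/-- The eigenvalue `λ₋(u)`. -/
def lamM (V' κ : ℝ → ℝ) (τ K u μ : ℝ) : ℝ :=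
  (g2TV κ τ u * hTV V' K μ u - Real.sqrt (discTV V' κ τ K u μ)) / 2

/-- `Z` is the minimal period of `(u,w)`. -/
def IsMinPeriod (u w : ℝ → ℝ) (Z : ℝ) : Prop :=
  0 < Z ∧ (∀ z, u (z + Z) = u z ∧ w (z + Z) = w z) ∧
  ∀ Z', 0 < Z' → (∀ z, u (z + Z') = u z ∧ w (z + Z') = w z) → Z ≤ Z'

/-!
For `K > 0` the sign of `f' = (K - V')/K` is that of `K - V'`. Since `V'` increases on `[0, U_M]`
and decreases on `[U_M, ∞)`, and since `K < V'(U_M)`, `f` decreases on `[u_M(K), u_m(K)]`, increases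
on `[0, u_M(K)]` and on `[u_m(K), ∞)`, and tends to `∞`; if `K ≤ V'(0)` the first increasing branch
is missing. The inequalities defining `D₁` and `D₂` are the signs of `f` at `0`, `u_M(K)` and
`u_m(K)`, so the zeros come from the intermediate value theorem on each branch.
-/

section Crossings

variable {α δ : Type*} [ConditionallyCompleteLinearOrder α] [TopologicalSpace α] [OrderTopology α]
  [DenselyOrdered α] [LinearOrder δ] [TopologicalSpace δ] [OrderClosedTopology δ]
  {g : α → δ} {a b : α} {y : δ}

lemma exists_crossing_of_strictMonoOn_Icc (hab : a ≤ b) (hg : ContinuousOn g (Icc a b))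
    (hmono : StrictMonoOn g (Icc a b)) (ha : g a < y) (hb : y < g b) :
    ∃ x ∈ Ioo a b, g x = y ∧ (∀ u ∈ Ico a x, g u < y) ∧ ∀ u ∈ Ioc x b, y < g u := by
  obtain ⟨x, hx, rfl⟩ := intermediate_value_Ioo hab hg ⟨ha, hb⟩
  have hx' : x ∈ Icc a b := Ioo_subset_Icc_self hx
  exact ⟨x, hx, rfl, fun u hu => hmono ⟨hu.1, (hu.2.trans hx.2).le⟩ hx' hu.2,
    fun u hu => hmono hx' ⟨(hx.1.trans hu.1).le, hu.2⟩ hu.1⟩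

lemma exists_crossing_of_strictAntiOn_Icc (hab : a ≤ b) (hg : ContinuousOn g (Icc a b))
    (hanti : StrictAntiOn g (Icc a b)) (ha : y < g a) (hb : g b < y) :
    ∃ x ∈ Ioo a b, g x = y ∧ (∀ u ∈ Ico a x, y < g u) ∧ ∀ u ∈ Ioc x b, g u < y :=
  exists_crossing_of_strictMonoOn_Icc (δ := δᵒᵈ) hab hg hanti ha hb

lemma exists_crossing_of_strictMonoOn_Ici (hg : ContinuousOn g (Ici b))
    (hmono : StrictMonoOn g (Ici b)) (htop : Tendsto g atTop atTop) (hb : g b < y) :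
    ∃ x ∈ Ioi b, g x = y ∧ (∀ u ∈ Ico b x, g u < y) ∧ ∀ u ∈ Ioi x, y < g u := by
  obtain ⟨x, hx, rfl⟩ := intermediate_value_Ioi hg htop hb
  have hx' : x ∈ Ici b := Ioi_subset_Ici_self hx
  exact ⟨x, hx, rfl, fun u hu => hmono hu.1 hx' hu.2,
    fun u hu => hmono hx' (hx'.trans (le_of_lt hu)) hu⟩

lemma exists_two_crossings (hab : a ≤ b) (hg : ContinuousOn g (Ici a))
    (hanti : StrictAntiOn g (Icc a b)) (hmono : StrictMonoOn g (Ici b))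
    (htop : Tendsto g atTop atTop) (ha : y < g a) (hb : g b < y) :
    ∃ x₀ ∈ Ioo a b, ∃ x₂ ∈ Ioi b, g x₀ = y ∧ g x₂ = y ∧
      (∀ u ∈ Ico a x₀, y < g u) ∧ (∀ u ∈ Ioo x₀ x₂, g u < y) ∧ ∀ u ∈ Ioi x₂, y < g u := by
  obtain ⟨x₀, hx₀, hgx₀, hpos, hneg⟩ :=
    exists_crossing_of_strictAntiOn_Icc hab (hg.mono Icc_subset_Ici_self) hanti ha hb
  obtain ⟨x₂, hx₂, hgx₂, hneg', hpos'⟩ :=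
    exists_crossing_of_strictMonoOn_Ici (hg.mono (Ici_subset_Ici.2 hab)) hmono htop hb
  refine ⟨x₀, hx₀, x₂, hx₂, hgx₀, hgx₂, hpos, fun u hu => ?_, hpos'⟩
  rcases le_total u b with hub | hbu
  · exact hneg u ⟨hu.1, hub⟩
  · exact hneg' u ⟨hbu, hu.2⟩

end Crossings

section Calculus

lemma lt_of_mem_interior_of_subset_Ici {D : Set ℝ} {a x : ℝ} (hD : D ⊆ Ici a)
    (hx : x ∈ interior D) : a < x := by
  simpa only [interior_Ici, mem_Ioi] using interior_mono hD hx

lemma strictMonoOn_or_strictAntiOn_of_hasDerivAt_ne_zero {D : Set ℝ} (hD : Convex ℝ D)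
    {g g' : ℝ → ℝ} (hg : ContinuousOn g D) (hg' : ∀ x ∈ interior D, HasDerivAt g (g' x) x)
    (hne : ∀ x ∈ interior D, g' x ≠ 0) : StrictMonoOn g D ∨ StrictAntiOn g D := by
  have hg'' : ∀ x ∈ interior D, HasDerivWithinAt g (g' x) (interior D) x :=
    fun x hx => (hg' x hx).hasDerivWithinAt
  exact (hasDerivWithinAt_forall_lt_or_forall_gt_of_forall_ne hD.interior hg'' hne).symm.imp
    (strictMonoOn_of_hasDerivWithinAt_pos hD hg hg'')
    (strictAntiOn_of_hasDerivWithinAt_neg hD hg hg'')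

lemma tendsto_atTop_of_le_hasDerivAt {g g' : ℝ → ℝ} {a C : ℝ} (hC : 0 < C)
    (hg : ∀ x ∈ Ici a, HasDerivAt g (g' x) x) (hg' : ∀ x ∈ Ici a, C ≤ g' x) :
    Tendsto g atTop atTop := by
  have hlin : Tendsto (fun x => g a + C * (x - a)) atTop atTop :=
    tendsto_atTop_add_const_left _ _
      ((tendsto_atTop_add_const_right _ (-a) tendsto_id).const_mul_atTop hC)
  refine tendsto_atTop_mono' _ ?_ hlin
  filter_upwards [eventually_ge_atTop a] with x hx
  have hgrowth : C * (x - a) ≤ g x - g a :=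
    (convex_Ici a).mul_sub_le_image_sub_of_le_deriv
      (fun u hu => (hg u hu).continuousAt.continuousWithinAt)
      (fun u hu => (hg u (interior_subset hu)).differentiableAt.differentiableWithinAt)
      (fun u hu => (hg u (interior_subset hu)).deriv ▸ hg' u (interior_subset hu))
      a self_mem_Ici x hx hx
  linarith

end Calculus

/-- `V` is differentiable on `[0, ∞)` with a unimodal derivative `V'`, increasing up to `UM ≥ 0` and
decreasing afterwards: the shape that fixes the monotone branches of `f`. The derivative is passed
as an argument, as in `A1`, and is one-sided at `0`. -/
structure HasUnimodalDeriv (V V' : ℝ → ℝ) (UM : ℝ) : Prop where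
  nonneg : 0 ≤ UM
  hasDerivWithinAt : ∀ u ∈ Ici (0 : ℝ), HasDerivWithinAt V (V' u) (Ici 0) u
  strictMonoOn : StrictMonoOn V' (Icc 0 UM)
  strictAntiOn : StrictAntiOn V' (Ici UM)

section Zeros

variable {V V' : ℝ → ℝ} {UM K K₁ c a m u u₁ u₀ u₂ : ℝ} {uMx umx : ℝ → ℝ}

lemma fTV_pos_iff (hK : 0 < K) : 0 < fTV V K c u ↔ c < K * u - V u := by
  rw [fTV, div_pos_iff_of_pos_right hK, sub_pos]

lemma fTV_neg_iff (hK : 0 < K) : fTV V K c u < 0 ↔ K * u - V u < c := by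
  rw [fTV, div_lt_iff₀ hK, zero_mul, sub_neg]

lemma fTV_zero_right : fTV V K c 0 = (c0v V - c) / K := by
  simp only [fTV, c0v, mul_zero, zero_sub]

lemma fdTV_pos_iff (hK : 0 < K) : 0 < fdTV V' K u ↔ V' u < K := by
  rw [fdTV, div_pos_iff_of_pos_right hK, sub_pos]

lemma fdTV_neg_iff (hK : 0 < K) : fdTV V' K u < 0 ↔ K < V' u := by
  rw [fdTV, div_lt_iff₀ hK, zero_mul, sub_neg]

lemma zerosD2_of_signs (h₀ : 0 < u₀) (h₀₂ : u₀ < u₂) (hf₀ : fTV V K c u₀ = 0)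
    (hf₂ : fTV V K c u₂ = 0) (hpos : ∀ u, 0 < u → u < u₀ → 0 < fTV V K c u)
    (hneg : ∀ u, u₀ < u → u < u₂ → fTV V K c u < 0) (hpos' : ∀ u, u₂ < u → 0 < fTV V K c u) :
    ZerosD2 V K c u₀ u₂ := by
  refine ⟨h₀, h₀₂, hf₀, hf₂, fun u hu hfu => ?_⟩
  grind

lemma zerosD1_of_signs (h₁ : 0 < u₁) (h₁₀ : u₁ < u₀) (h₀₂ : u₀ < u₂) (hf₁ : fTV V K c u₁ = 0)
    (hf₀ : fTV V K c u₀ = 0) (hf₂ : fTV V K c u₂ = 0)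
    (hneg : ∀ u, 0 < u → u < u₁ → fTV V K c u < 0) (hpos : ∀ u, u₁ < u → u < u₀ → 0 < fTV V K c u)
    (hneg' : ∀ u, u₀ < u → u < u₂ → fTV V K c u < 0) (hpos' : ∀ u, u₂ < u → 0 < fTV V K c u) :
    ZerosD1 V K c u₁ u₀ u₂ := by
  refine ⟨h₁, h₁₀, h₀₂, hf₁, hf₀, hf₂, fun u hu hfu => ?_⟩
  grind

lemma bounds_of_mem_D2 (hV'0 : 0 ≤ V' 0) (hK₁ : K1Hyp V V' UM umx K₁)
    (hD : (K, c) ∈ D2 V V' umx K₁) :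
    0 < K ∧ K < V' UM ∧ cmf V umx K < c ∧ c ≤ c0v V ∧ (K ≤ V' 0 → c < c0v V) := by
  obtain ⟨-, hK₁M, hlt, -, -⟩ := hK₁
  rcases hD with ⟨hK₀ : V' 0 < K, hKK₁ : K < K₁, rfl : c = c0v V⟩ |
    ⟨hK : 0 < K, hKK₁ : K < K₁, hcm : cmf V umx K < c, hc₀ : c < c0v V⟩
  · have hK : 0 < K := hV'0.trans_lt hK₀
    exact ⟨hK, hKK₁.trans hK₁M, hlt K hK hKK₁, le_rfl, fun hK₀' => absurd hK₀' hK₀.not_ge⟩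
  · exact ⟨hK, hKK₁.trans hK₁M, hcm, hc₀.le, fun _ => hc₀⟩

namespace HasUnimodalDeriv

lemma hasDerivAt_fTV (h : HasUnimodalDeriv V V' UM) (hu : 0 < u) :
    HasDerivAt (fTV V K c) (fdTV V' K u) u := by
  have hV : HasDerivAt V (V' u) u := (h.hasDerivWithinAt u hu.le).hasDerivAt (Ici_mem_nhds hu)
  exact (((hasDerivAt_const_mul K).sub hV).sub_const c).div_const K

lemma continuousOn_fTV (h : HasUnimodalDeriv V V' UM) : ContinuousOn (fTV V K c) (Ici 0) := by
  have hV : ContinuousOn V (Ici 0) := fun u hu => (h.hasDerivWithinAt u hu).continuousWithinAt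
  unfold fTV
  fun_prop

lemma deriv_lt_of_lt_left (h : HasUnimodalDeriv V V' UM) (ha : a ≤ UM) (hu : 0 ≤ u) (hua : u < a) :
    V' u < V' a :=
  h.strictMonoOn ⟨hu, hua.le.trans ha⟩ ⟨hu.trans hua.le, ha⟩ hua

lemma deriv_lt_of_lt_right (h : HasUnimodalDeriv V V' UM) (hm : UM ≤ m) (hmu : m < u) :
    V' u < V' m :=
  h.strictAntiOn hm (hm.trans hmu.le) hmu

lemma lt_deriv_of_mem_Ioo (h : HasUnimodalDeriv V V' UM) (ha : 0 ≤ a) (hKa : K ≤ V' a)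
    (hKm : K ≤ V' m) (hu : u ∈ Ioo a m) : K < V' u := by
  rcases le_total u UM with huM | hMu
  · exact hKa.trans_lt (h.deriv_lt_of_lt_left huM ha hu.1)
  · exact hKm.trans_lt (h.deriv_lt_of_lt_right hMu hu.2)

lemma strictMonoOn_fTV (h : HasUnimodalDeriv V V' UM) (hK : 0 < K) {D : Set ℝ}
    (hD : Convex ℝ D) (hD₀ : D ⊆ Ici 0) (hV' : ∀ u ∈ interior D, V' u < K) :
    StrictMonoOn (fTV V K c) D := by
  have hpos : ∀ u ∈ interior D, 0 < u := fun u => lt_of_mem_interior_of_subset_Ici hD₀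
  exact strictMonoOn_of_hasDerivWithinAt_pos hD (h.continuousOn_fTV.mono hD₀)
    (fun u hu => (h.hasDerivAt_fTV (hpos u hu)).hasDerivWithinAt)
    (fun u hu => (fdTV_pos_iff hK).2 (hV' u hu))

lemma strictAntiOn_fTV (h : HasUnimodalDeriv V V' UM) (hK : 0 < K) {D : Set ℝ}
    (hD : Convex ℝ D) (hD₀ : D ⊆ Ici 0) (hV' : ∀ u ∈ interior D, K < V' u) :
    StrictAntiOn (fTV V K c) D := by
  have hpos : ∀ u ∈ interior D, 0 < u := fun u => lt_of_mem_interior_of_subset_Ici hD₀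
  exact strictAntiOn_of_hasDerivWithinAt_neg hD (h.continuousOn_fTV.mono hD₀)
    (fun u hu => (h.hasDerivAt_fTV (hpos u hu)).hasDerivWithinAt)
    (fun u hu => (fdTV_neg_iff hK).2 (hV' u hu))

lemma strictMonoOn_fTV_Icc (h : HasUnimodalDeriv V V' UM) (hK : 0 < K) (ha : a ≤ UM)
    (hKa : V' a ≤ K) : StrictMonoOn (fTV V K c) (Icc 0 a) := by
  refine h.strictMonoOn_fTV hK (convex_Icc 0 a) Icc_subset_Ici_self fun u hu => ?_
  rw [interior_Icc] at hu
  exact (h.deriv_lt_of_lt_left ha hu.1.le hu.2).trans_le hKa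

lemma strictAntiOn_fTV_Icc (h : HasUnimodalDeriv V V' UM) (hK : 0 < K) (ha : 0 ≤ a)
    (hKa : K ≤ V' a) (hKm : K ≤ V' m) : StrictAntiOn (fTV V K c) (Icc a m) := by
  refine h.strictAntiOn_fTV hK (convex_Icc a m) (fun u hu => ha.trans hu.1) fun u hu => ?_
  rw [interior_Icc] at hu
  exact h.lt_deriv_of_mem_Ioo ha hKa hKm hu

lemma strictMonoOn_fTV_Ici (h : HasUnimodalDeriv V V' UM) (hK : 0 < K) (hm : UM ≤ m)
    (hKm : V' m ≤ K) : StrictMonoOn (fTV V K c) (Ici m) := by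
  refine h.strictMonoOn_fTV hK (convex_Ici m) (Ici_subset_Ici.2 (h.nonneg.trans hm)) fun u hu => ?_
  rw [interior_Ici] at hu
  exact (h.deriv_lt_of_lt_right hm hu).trans_le hKm

lemma tendsto_fTV_atTop (h : HasUnimodalDeriv V V' UM) (hK : 0 < K) (hm : UM ≤ m)
    (hKm : V' m ≤ K) : Tendsto (fTV V K c) atTop atTop := by
  have hm₀ : 0 ≤ m := h.nonneg.trans hm
  have hslope : 0 < fdTV V' K (m + 1) :=
    (fdTV_pos_iff hK).2 ((h.deriv_lt_of_lt_right hm (lt_add_one m)).trans_le hKm)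
  refine tendsto_atTop_of_le_hasDerivAt (a := m + 1) hslope
    (fun u hu => h.hasDerivAt_fTV (by linarith [mem_Ici.1 hu])) fun u hu => ?_
  have hV'u : V' u ≤ V' (m + 1) :=
    h.strictAntiOn.antitoneOn (by simp only [mem_Ici]; linarith)
      (by simp only [mem_Ici] at hu ⊢; linarith) hu
  unfold fdTV
  gcongr

theorem exists_two_zeros (h : HasUnimodalDeriv V V' UM) (hK : 0 < K) (ha : 0 ≤ a) (haM : a ≤ UM)
    (hm : UM < m) (hKa : K ≤ V' a) (hKm : V' m = K) (hfa : 0 < fTV V K c a)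
    (hfm : fTV V K c m < 0) :
    ∃ u₀ u₂ : ℝ, a < u₀ ∧ u₀ < u₂ ∧ fTV V K c u₀ = 0 ∧ fTV V K c u₂ = 0 ∧
      (∀ u, a ≤ u → u < u₀ → 0 < fTV V K c u) ∧ (∀ u, u₀ < u → u < u₂ → fTV V K c u < 0) ∧
      (∀ u, u₂ < u → 0 < fTV V K c u) ∧ fdTV V' K u₀ < 0 ∧ 0 < fdTV V' K u₂ := by
  obtain ⟨u₀, hu₀, u₂, hu₂, hf₀, hf₂, hpos, hneg, hpos'⟩ :=
    exists_two_crossings (haM.trans hm.le) (h.continuousOn_fTV.mono (Ici_subset_Ici.2 ha))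
      (h.strictAntiOn_fTV_Icc hK ha hKa hKm.ge) (h.strictMonoOn_fTV_Ici hK hm.le hKm.le)
      (h.tendsto_fTV_atTop hK hm.le hKm.le) hfa hfm
  exact ⟨u₀, u₂, hu₀.1, hu₀.2.trans hu₂, hf₀, hf₂, fun u hau huu₀ => hpos u ⟨hau, huu₀⟩,
    fun u h₀ h₂ => hneg u ⟨h₀, h₂⟩, hpos',
    (fdTV_neg_iff hK).2 (h.lt_deriv_of_mem_Ioo ha hKa hKm.ge hu₀),
    (fdTV_pos_iff hK).2 (hKm ▸ h.deriv_lt_of_lt_right hm.le hu₂)⟩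

theorem exists_zerosD1 (h : HasUnimodalDeriv V V' UM) (hV'0 : 0 ≤ V' 0)
    (huMx : UMaxHyp V' UM uMx) (humx : UMinHyp V' UM umx) (hD : (K, c) ∈ D1 V V' UM uMx umx) :
    ∃ u₁ u₀ u₂ : ℝ, ZerosD1 V K c u₁ u₀ u₂ ∧
      (∀ u, u₁ < u → u < u₀ → 0 < fTV V K c u) ∧
      (∀ u, u₂ < u → 0 < fTV V K c u) ∧
      (∀ u, 0 < u → u < u₁ → fTV V K c u < 0) ∧
      (∀ u, u₀ < u → u < u₂ → fTV V K c u < 0) ∧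
      0 < fdTV V' K u₁ ∧ 0 < fdTV V' K u₂ ∧ fdTV V' K u₀ < 0 := by
  obtain ⟨hK₀ : V' 0 < K, hKM : K < V' UM, hc₁ : c1f V umx K < c, hcM : c < cMf V uMx K⟩ := hD
  obtain ⟨hc₀, hcm⟩ := max_lt_iff.1 hc₁
  have hK : 0 < K := hV'0.trans_lt hK₀
  obtain ⟨⟨hM₀, hM⟩, hVM⟩ := huMx K hK₀ hKM
  obtain ⟨hm, hVm⟩ := humx K hK hKM
  have hf0 : fTV V K c 0 < 0 := fTV_zero_right ▸ div_neg_of_neg_of_pos (sub_neg.2 hc₀) hK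
  have hfM : 0 < fTV V K c (uMx K) := (fTV_pos_iff hK).2 hcM
  obtain ⟨u₁, ⟨hu₁, hu₁M⟩, hf₁, hneg, hpos⟩ :=
    exists_crossing_of_strictMonoOn_Icc hM₀.le (h.continuousOn_fTV.mono Icc_subset_Ici_self)
      (h.strictMonoOn_fTV_Icc hK hM.le hVM.le) hf0 hfM
  obtain ⟨u₀, u₂, hMu₀, h₀₂, hf₀, hf₂, hpos', hneg', hpos₂, hd₀, hd₂⟩ :=
    h.exists_two_zeros hK hM₀.le hM.le hm hVM.ge hVm hfM ((fTV_neg_iff hK).2 hcm)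
  have hneg₁ : ∀ u, 0 < u → u < u₁ → fTV V K c u < 0 := fun u hu huu₁ => hneg u ⟨hu.le, huu₁⟩
  have hpos₁ : ∀ u, u₁ < u → u < u₀ → 0 < fTV V K c u := fun u hu huu₀ =>
    (le_total u (uMx K)).elim (fun huM => hpos u ⟨hu, huM⟩) (fun hMu => hpos' u hMu huu₀)
  have hd₁ : 0 < fdTV V' K u₁ :=
    (fdTV_pos_iff hK).2 (hVM ▸ h.deriv_lt_of_lt_left hM.le hu₁.le hu₁M)
  exact ⟨u₁, u₀, u₂,
    zerosD1_of_signs hu₁ (hu₁M.trans hMu₀) h₀₂ hf₁ hf₀ hf₂ hneg₁ hpos₁ hneg' hpos₂,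
    hpos₁, hpos₂, hneg₁, hneg', hd₁, hd₂, hd₀⟩

lemma exists_fTV_pos_Ioc (h : HasUnimodalDeriv V V' UM) (huMx : UMaxHyp V' UM uMx) (hK : 0 < K)
    (hKM : K < V' UM) (hc₀ : c ≤ c0v V) (hc₀' : K ≤ V' 0 → c < c0v V) :
    ∃ a, 0 ≤ a ∧ a ≤ UM ∧ K ≤ V' a ∧ 0 < fTV V K c a ∧ ∀ u ∈ Ioc 0 a, 0 < fTV V K c u := by
  rcases le_or_gt K (V' 0) with hK₀ | hK₀
  · have hf0 : 0 < fTV V K c 0 := fTV_zero_right ▸ div_pos (sub_pos.2 (hc₀' hK₀)) hK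
    exact ⟨0, le_rfl, h.nonneg, hK₀, hf0, fun u hu => absurd hu.1 hu.2.not_gt⟩
  · obtain ⟨⟨hM₀, hM⟩, hVM⟩ := huMx K hK₀ hKM
    have hf0 : 0 ≤ fTV V K c 0 := fTV_zero_right ▸ div_nonneg (sub_nonneg.2 hc₀) hK.le
    have hpos : ∀ u ∈ Ioc 0 (uMx K), 0 < fTV V K c u := fun u hu =>
      hf0.trans_lt <| h.strictMonoOn_fTV_Icc hK hM.le hVM.le ⟨le_rfl, hM₀.le⟩
        (Ioc_subset_Icc_self hu) hu.1
    exact ⟨uMx K, hM₀.le, hM.le, hVM.ge, hpos _ ⟨hM₀, le_rfl⟩, hpos⟩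

theorem exists_zerosD2 (h : HasUnimodalDeriv V V' UM) (hV'0 : 0 ≤ V' 0)
    (huMx : UMaxHyp V' UM uMx) (humx : UMinHyp V' UM umx) (hK₁ : K1Hyp V V' UM umx K₁)
    (hD : (K, c) ∈ D2 V V' umx K₁) :
    ∃ u₀ u₂ : ℝ, ZerosD2 V K c u₀ u₂ ∧
      (∀ u, 0 < u → u < u₀ → 0 < fTV V K c u) ∧
      (∀ u, u₂ < u → 0 < fTV V K c u) ∧
      (∀ u, u₀ < u → u < u₂ → fTV V K c u < 0) ∧
      0 < fdTV V' K u₂ ∧ fdTV V' K u₀ < 0 := by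
  obtain ⟨hK, hKM, hcm, hc₀, hc₀'⟩ := bounds_of_mem_D2 hV'0 hK₁ hD
  obtain ⟨hm, hVm⟩ := humx K hK hKM
  obtain ⟨a, ha, haM, hKa, hfa, hpos⟩ := h.exists_fTV_pos_Ioc huMx hK hKM hc₀ hc₀'
  obtain ⟨u₀, u₂, hau₀, h₀₂, hf₀, hf₂, hpos', hneg, hpos₂, hd₀, hd₂⟩ :=
    h.exists_two_zeros hK ha haM hm hKa hVm hfa ((fTV_neg_iff hK).2 hcm)
  have hpos₀ : ∀ u, 0 < u → u < u₀ → 0 < fTV V K c u := fun u hu huu₀ =>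
    (le_total u a).elim (fun hua => hpos u ⟨hu, hua⟩) (fun hau => hpos' u hau huu₀)
  exact ⟨u₀, u₂, zerosD2_of_signs (ha.trans_lt hau₀) h₀₂ hf₀ hf₂ hpos₀ hneg hpos₂,
    hpos₀, hpos₂, hneg, hd₂, hd₀⟩

end HasUnimodalDeriv

end Zeros

namespace A1

variable {V V' V'' : ℝ → ℝ} {UM : ℝ}

lemma deriv_zero_nonneg (h : A1 V V' V'' UM) : 0 ≤ V' 0 := by
  obtain ⟨-, hcont, -, -, hpos, -⟩ := h
  have hlim : Tendsto V' (nhdsWithin 0 (Ioi 0)) (nhds (V' 0)) :=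
    (hcont 0 self_mem_Ici).mono Ioi_subset_Ici_self
  exact ge_of_tendsto hlim (eventually_mem_nhdsWithin.mono fun u hu => (hpos u hu).le)

lemma strictMonoOn_or_strictAntiOn (h : A1 V V' V'' UM) {D : Set ℝ} (hD : Convex ℝ D)
    (hD₀ : D ⊆ Ici 0) (hUM : UM ∉ interior D) : StrictMonoOn V' D ∨ StrictAntiOn V' D := by
  obtain ⟨-, hcont, hderiv, -, -, -, -, -, -, hzero⟩ := h
  have hpos : ∀ u ∈ interior D, 0 < u := fun u => lt_of_mem_interior_of_subset_Ici hD₀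
  exact strictMonoOn_or_strictAntiOn_of_hasDerivAt_ne_zero hD (hcont.mono hD₀)
    (fun u hu => hderiv u (hpos u hu))
    (fun u hu hu₀ => hUM ((hzero u (hpos u hu)).1 hu₀ ▸ hu))

lemma hasUnimodalDeriv (h : A1 V V' V'' UM) : HasUnimodalDeriv V V' UM := by
  have ⟨hderiv, _, _, _, _, _, _, hUM, hmax, _⟩ := h
  refine ⟨hUM.le, hderiv, ?_, ?_⟩
  · refine (h.strictMonoOn_or_strictAntiOn (convex_Icc 0 UM) Icc_subset_Ici_self
      (by simp)).resolve_right fun hanti => ?_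
    have hlt : V' UM < V' (UM / 2) :=
      hanti ⟨by linarith, by linarith⟩ ⟨hUM.le, le_rfl⟩ (by linarith)
    exact (hmax _ (half_pos hUM)).not_gt hlt
  · refine (h.strictMonoOn_or_strictAntiOn (convex_Ici UM) (Ici_subset_Ici.2 hUM.le)
      (by simp)).resolve_left fun hmono => ?_
    have hlt : V' UM < V' (UM + 1) :=
      hmono self_mem_Ici (lt_add_one UM).le (lt_add_one UM)
    exact (hmax _ (by linarith)).not_gt hlt

end A1

theorem stmt10_general
    (V V' : ℝ → ℝ) (UM K c K₁ : ℝ) (uMx umx : ℝ → ℝ)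
    (hV : HasUnimodalDeriv V V' UM) (hV'0 : 0 ≤ V' 0)
    (huMx : UMaxHyp V' UM uMx) (humx : UMinHyp V' UM umx)
    (hK1 : K1Hyp V V' UM umx K₁) :
    ((K, c) ∈ D1 V V' UM uMx umx →
      ∃ u1 u0 u2 : ℝ, ZerosD1 V K c u1 u0 u2 ∧
        (∀ u, u1 < u → u < u0 → 0 < fTV V K c u) ∧
        (∀ u, u2 < u → 0 < fTV V K c u) ∧
        (∀ u, 0 < u → u < u1 → fTV V K c u < 0) ∧
        (∀ u, u0 < u → u < u2 → fTV V K c u < 0) ∧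
        0 < fdTV V' K u1 ∧ 0 < fdTV V' K u2 ∧ fdTV V' K u0 < 0) ∧
    ((K, c) ∈ D2 V V' umx K₁ →
      ∃ u0 u2 : ℝ, ZerosD2 V K c u0 u2 ∧
        (∀ u, 0 < u → u < u0 → 0 < fTV V K c u) ∧
        (∀ u, u2 < u → 0 < fTV V K c u) ∧
        (∀ u, u0 < u → u < u2 → fTV V K c u < 0) ∧
        0 < fdTV V' K u2 ∧ fdTV V' K u0 < 0 ∧
        (V' 0 < K → K < K₁ → c = c0v V → fTV V K c 0 = 0 ∧ 0 < fdTV V' K 0) ∧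
        (0 < K → K < K₁ → cmf V umx K < c → c < c0v V → 0 < fTV V K c 0)) := by
  refine ⟨hV.exists_zerosD1 hV'0 huMx humx, fun hD => ?_⟩
  obtain ⟨u0, u2, hzeros, hpos, hpos', hneg, hd₂, hd₀⟩ := hV.exists_zerosD2 hV'0 huMx humx hK1 hD
  refine ⟨u0, u2, hzeros, hpos, hpos', hneg, hd₂, hd₀, ?_, ?_⟩
  · rintro hK₀ - rfl
    exact ⟨by rw [fTV_zero_right, sub_self, zero_div], (fdTV_pos_iff (hV'0.trans_lt hK₀)).2 hK₀⟩
  · rintro hK - - hc₀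
    exact fTV_zero_right ▸ div_pos (sub_pos.2 hc₀) hK

theorem stmt10
    (V V' V'' κ : ℝ → ℝ) (τ UM K c K₁ : ℝ) (uMx umx : ℝ → ℝ)
    (hA1 : A1 V V' V'' UM) (hA2 : A2 κ) (hτ : 0 < τ) (hK : K ≠ 0)
    (huMx : UMaxHyp V' UM uMx) (humx : UMinHyp V' UM umx)
    (hK1 : K1Hyp V V' UM umx K₁) :
    ((K, c) ∈ D1 V V' UM uMx umx →
      ∃ u1 u0 u2 : ℝ, ZerosD1 V K c u1 u0 u2 ∧
        (∀ u, u1 < u → u < u0 → 0 < fTV V K c u) ∧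
        (∀ u, u2 < u → 0 < fTV V K c u) ∧
        (∀ u, 0 < u → u < u1 → fTV V K c u < 0) ∧
        (∀ u, u0 < u → u < u2 → fTV V K c u < 0) ∧
        0 < fdTV V' K u1 ∧ 0 < fdTV V' K u2 ∧ fdTV V' K u0 < 0) ∧
    ((K, c) ∈ D2 V V' umx K₁ →
      ∃ u0 u2 : ℝ, ZerosD2 V K c u0 u2 ∧
        (∀ u, 0 < u → u < u0 → 0 < fTV V K c u) ∧
        (∀ u, u2 < u → 0 < fTV V K c u) ∧
        (∀ u, u0 < u → u < u2 → fTV V K c u < 0) ∧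
        0 < fdTV V' K u2 ∧ fdTV V' K u0 < 0 ∧
        (V' 0 < K → K < K₁ → c = c0v V → fTV V K c 0 = 0 ∧ 0 < fdTV V' K 0) ∧
        (0 < K → K < K₁ → cmf V umx K < c → c < c0v V → 0 < fTV V K c 0)) :=
  stmt10_general V V' UM K c K₁ uMx umx hA1.hasUnimodalDeriv hA1.deriv_zero_nonneg huMx humx hK1

end TrafficTW
end
end

section
/- The zeros u₀(K,c), u₁(K,c), u₂(K,c) of f are C¹ functions of (K,c) (u₁ on D₁; u₀ and u₂ on D₁ ∪ D₂), and for each fixed K they satisfy the limits: u₀(K,c) → u_M(K) and u₁(K,c) → u_M(K) as c → c_M(K), and u₀(K,c) → u_m(K) and u₂(K,c) → u_m(K) as c → c_m(K). -/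
open Set Filter MeasureTheory

noncomputable section

namespace TrafficTW

/-!
Put `g(K, u) = K u - V u`, so that the zeros of `f` are the solutions of `g(K, u) = c`. Assumption
(A1) makes `V'` increase on `[0, U_M]` and decrease on `[U_M, ∞)`, so `g(K, ·)` increases,
decreases and increases again along three successive arcs, cut out by the sign of `K - V'` and the
position relative to `U_M`. Each arc carries at most one zero, hence three ordered zeros lie on the
three arcs in order, and two ordered zeros at a level `c ≤ c₀ = g(K, 0)` avoid the first arc. Off
the turning points the map `(K, u) ↦ (K, g(K, u))` is injective along each arc and has invertible
derivative, so its inverse is `C¹`. At a turning point the limit follows from the continuity of the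
inverse of the strictly monotone function `g(K, ·)` on a closed arc.
-/

section OrderedInverse

variable {α β ι : Type*} [LinearOrder α] [LinearOrder β] [TopologicalSpace β]
  [OrderClosedTopology β] {s : Set α} {f : α → β} {x : α} {l : Filter ι} {w : ι → α}

lemma eventually_lt_of_strictMonoOn (hs : s.OrdConnected) (hf : StrictMonoOn f s) (hx : x ∈ s)
    (hw : ∀ᶠ i in l, w i ∈ s) (hfw : Tendsto (fun i => f (w i)) l (nhds (f x))) {a : α}
    (ha : a < x) : ∀ᶠ i in l, a < w i := by
  by_cases has : a ∈ s
  · filter_upwards [hw, hfw.eventually_const_lt (hf has hx ha)] with i hi hlt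
    exact (hf.lt_iff_lt has hi).1 hlt
  · filter_upwards [hw] with i hi
    by_contra! hle
    exact has (hs.out hi hx ⟨hle, ha.le⟩)

lemma tendsto_nhds_of_strictMonoOn [TopologicalSpace α] [OrderTopology α]
    (hs : s.OrdConnected) (hf : StrictMonoOn f s) (hx : x ∈ s) (hw : ∀ᶠ i in l, w i ∈ s)
    (hfw : Tendsto (fun i => f (w i)) l (nhds (f x))) :
    Tendsto w l (nhds x) :=
  tendsto_order.2
    ⟨fun _ ha => eventually_lt_of_strictMonoOn hs hf hx hw hfw ha,
      fun _ ha => eventually_lt_of_strictMonoOn (α := αᵒᵈ) (β := βᵒᵈ) hs.dual hf.dual hx hw hfw ha⟩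

lemma tendsto_nhds_of_strictAntiOn [TopologicalSpace α] [OrderTopology α]
    (hs : s.OrdConnected) (hf : StrictAntiOn f s) (hx : x ∈ s) (hw : ∀ᶠ i in l, w i ∈ s)
    (hfw : Tendsto (fun i => f (w i)) l (nhds (f x))) :
    Tendsto w l (nhds x) :=
  tendsto_nhds_of_strictMonoOn (β := βᵒᵈ) hs hf.dual_right hx hw hfw

end OrderedInverse

lemma contDiffOn_of_rightInverse {𝕜 E F : Type*} [RCLike 𝕜] [NormedAddCommGroup E]
    [NormedSpace 𝕜 E] [CompleteSpace E] [NormedAddCommGroup F] [NormedSpace 𝕜 F]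
    {n : WithTop ℕ∞} (hn : n ≠ 0) {f : E → F} {g : F → E} {R : Set E} {S : Set F}
    (hR : IsOpen R) (hf : ContDiffOn 𝕜 n f R)
    (hf' : ∀ x ∈ R, ∃ f' : E ≃L[𝕜] F, HasFDerivAt f (f' : E →L[𝕜] F) x)
    (hinj : InjOn f R) (hg : MapsTo g S R) (hfg : ∀ y ∈ S, f (g y) = y) :
    ContDiffOn 𝕜 n g S := by
  intro y hy
  obtain ⟨f', hf'⟩ := hf' _ (hg hy)
  have hfx : ContDiffAt 𝕜 n f (g y) := hf.contDiffAt (hR.mem_nhds (hg hy))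
  set φ := hfx.localInverse hf' hn
  have hφ : ContDiffAt 𝕜 n φ y := hfg y hy ▸ hfx.to_localInverse hf' hn
  have hφy : φ y = g y :=
    (congrArg φ (hfg y hy)).symm.trans (hfx.localInverse_apply_image hf' hn)
  have hfφ : ∀ᶠ z in nhds y, f (φ z) = z :=
    hfg y hy ▸ (hfx.hasStrictFDerivAt' hf' hn).eventually_right_inverse
  have hφR : ∀ᶠ z in nhds y, φ z ∈ R :=
    hφ.continuousAt (hφy ▸ hR.mem_nhds (hg hy))
  refine hφ.contDiffWithinAt.congr_of_eventuallyEq ?_ hφy.symm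
  filter_upwards [nhdsWithin_le_nhds hfφ, nhdsWithin_le_nhds hφR, self_mem_nhdsWithin]
    with z hfz hzR hzS
  exact hinj (hg hzS) hzR ((hfg z hzS).trans hfz.symm)

lemma strictMonoOn_or_strictAntiOn_of_deriv_ne_zero {D : Set ℝ} (hD : Convex ℝ D) {f : ℝ → ℝ}
    (hf : ContinuousOn f D) (hf' : ∀ x ∈ interior D, deriv f x ≠ 0) :
    StrictMonoOn f D ∨ StrictAntiOn f D := by
  rcases hasDerivWithinAt_forall_lt_or_forall_gt_of_forall_ne hD.interior
    (fun x hx => (differentiableAt_of_deriv_ne_zero (hf' x hx)).hasDerivAt.hasDerivWithinAt) hf'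
    with h | h
  · exact .inr (strictAntiOn_of_deriv_neg hD hf h)
  · exact .inl (strictMonoOn_of_deriv_pos hD hf h)

/-- `V` is a sigmoidal `C¹` function on `[0, ∞)` with derivative `V'` and inflection point `UM`.
This is the shape that (A1) forces on `V`, expressed without second derivatives. -/
structure IsSigmoidal (V V' : ℝ → ℝ) (UM : ℝ) : Prop where
  hasDerivWithinAt : ∀ u ∈ Ici (0 : ℝ), HasDerivWithinAt V (V' u) (Ici 0) u
  continuousOn_deriv : ContinuousOn V' (Ici 0)
  deriv_zero_nonneg : 0 ≤ V' 0
  inflection_pos : 0 < UM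
  strictMonoOn_deriv : StrictMonoOn V' (Icc 0 UM)
  strictAntiOn_deriv : StrictAntiOn V' (Ici UM)

theorem A1.isSigmoidal {V V' V'' : ℝ → ℝ} {UM : ℝ} (h : A1 V V' V'' UM) :
    IsSigmoidal V V' UM := by
  obtain ⟨hV, hc, hV', -, hpos, -, -, hU, hmax, hV''⟩ := h
  have deriv_ne_zero : ∀ u, 0 < u → u ≠ UM → deriv V' u ≠ 0 := fun u hu hne => by
    rw [(hV' u hu).deriv]
    exact mt (hV'' u hu).1 hne
  refine ⟨hV, hc, ?_, hU, ?_, ?_⟩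
  · have hlim : Tendsto V' (nhdsWithin 0 (Ioi 0)) (nhds (V' 0)) :=
      (hc 0 self_mem_Ici).mono Ioi_subset_Ici_self
    exact ge_of_tendsto hlim (eventually_mem_nhdsWithin.mono fun x hx => (hpos x hx).le)
  · refine (strictMonoOn_or_strictAntiOn_of_deriv_ne_zero (convex_Icc 0 UM)
      (hc.mono Icc_subset_Ici_self) ?_).resolve_right fun hanti => ?_
    · rw [interior_Icc]
      exact fun u hu => deriv_ne_zero u hu.1 hu.2.ne
    · have hlt : V' UM < V' (UM / 2) :=
        hanti ⟨by linarith, by linarith⟩ ⟨hU.le, le_rfl⟩ (by linarith)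
      exact (hmax (UM / 2) (by linarith)).not_gt hlt
  · refine (strictMonoOn_or_strictAntiOn_of_deriv_ne_zero (convex_Ici UM)
      (hc.mono (Ici_subset_Ici.2 hU.le)) ?_).resolve_left fun hmono => ?_
    · rw [interior_Ici]
      exact fun u hu => deriv_ne_zero u (hU.trans hu) (ne_of_gt hu)
    · have hlt : V' UM < V' (UM + 1) := hmono self_mem_Ici (mem_Ici.2 (by linarith)) (by linarith)
      exact (hmax (UM + 1) (by linarith)).not_gt hlt

/-- The function `u ↦ K u - V u`. Its level set at `c` consists of the zeros of `f`, and its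
extreme values are `c_M(K)` and `c_m(K)`. -/
def profile (V : ℝ → ℝ) (K u : ℝ) : ℝ := K * u - V u

/-- The map `(K, u) ↦ (K, K u - V u)`, whose local inverses are the zeros of `f` as functions of
`(K, c)`. -/
def levelMap (V : ℝ → ℝ) (q : ℝ × ℝ) : ℝ × ℝ := (q.1, profile V q.1 q.2)

/-- The first arc of the profile, on which it increases up to its local maximum. -/
def lowerArc (V' : ℝ → ℝ) (UM K : ℝ) : Set ℝ := {u | u ∈ Icc 0 UM ∧ V' u ≤ K}

/-- The second arc of the profile, on which it decreases between its two local extrema. -/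
def middleArc (V' : ℝ → ℝ) (K : ℝ) : Set ℝ := {u | 0 ≤ u ∧ K ≤ V' u}

/-- The third arc of the profile, on which it increases from its local minimum onwards. -/
def upperArc (V' : ℝ → ℝ) (UM K : ℝ) : Set ℝ := {u | UM ≤ u ∧ V' u ≤ K}

/-- The open region swept out in the `(K, u)` plane by the interiors of the first arcs. -/
def lowerRegion (V' : ℝ → ℝ) (UM : ℝ) : Set (ℝ × ℝ) := {q | q.2 ∈ Ioo 0 UM ∧ V' q.2 < q.1}

/-- The open region swept out in the `(K, u)` plane by the interiors of the second arcs. -/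
def middleRegion (V' : ℝ → ℝ) : Set (ℝ × ℝ) := {q | 0 < q.2 ∧ q.1 < V' q.2}

/-- The open region swept out in the `(K, u)` plane by the interiors of the third arcs. -/
def upperRegion (V' : ℝ → ℝ) (UM : ℝ) : Set (ℝ × ℝ) := {q | UM < q.2 ∧ V' q.2 < q.1}

/-- For parameters `(K, c)` in `S`, the function `u` selects a zero of `f` in the region `R` of the
`(K, u)` plane. -/
def IsZeroBranch (V : ℝ → ℝ) (R S : Set (ℝ × ℝ)) (u : ℝ → ℝ → ℝ) : Prop :=
  ∀ K c, (K, c) ∈ S → (K, u K c) ∈ R ∧ profile V K (u K c) = c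

lemma fTV_eq_zero_iff {V : ℝ → ℝ} {K c u : ℝ} (hK : K ≠ 0) :
    fTV V K c u = 0 ↔ profile V K u = c := by
  rw [fTV, div_eq_zero_iff, or_iff_left hK, sub_eq_zero, profile]

lemma c0v_eq_profile_zero (V : ℝ → ℝ) (K : ℝ) : c0v V = profile V K 0 := by
  simp [c0v, profile]

lemma lowerRegion_slice_subset {V' : ℝ → ℝ} {UM : ℝ} (K : ℝ) :
    {u | (K, u) ∈ lowerRegion V' UM} ⊆ lowerArc V' UM K :=
  fun _ hu => ⟨Ioo_subset_Icc_self hu.1, hu.2.le⟩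

lemma middleRegion_slice_subset {V' : ℝ → ℝ} (K : ℝ) :
    {u | (K, u) ∈ middleRegion V'} ⊆ middleArc V' K :=
  fun _ hu => ⟨hu.1.le, hu.2.le⟩

lemma upperRegion_slice_subset {V' : ℝ → ℝ} {UM : ℝ} (K : ℝ) :
    {u | (K, u) ∈ upperRegion V' UM} ⊆ upperArc V' UM K :=
  fun _ hu => ⟨hu.1.le, hu.2.le⟩

namespace IsSigmoidal

variable {V V' : ℝ → ℝ} {UM : ℝ}

lemma hasDerivAt (h : IsSigmoidal V V' UM) {u : ℝ} (hu : 0 < u) : HasDerivAt V (V' u) u :=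
  (h.hasDerivWithinAt u hu.le).hasDerivAt (Ici_mem_nhds hu)

lemma hasDerivAt_profile (h : IsSigmoidal V V' UM) (K : ℝ) {u : ℝ} (hu : 0 < u) :
    HasDerivAt (profile V K) (K - V' u) u := by
  simpa using! ((hasDerivAt_id u).const_mul K).sub (h.hasDerivAt hu)

lemma continuousOn_profile (h : IsSigmoidal V V' UM) (K : ℝ) :
    ContinuousOn (profile V K) (Ici 0) :=
  (continuousOn_id.const_mul K).sub fun u hu => (h.hasDerivWithinAt u hu).continuousWithinAt

lemma exists_profile_sub_eq (h : IsSigmoidal V V' UM) (K : ℝ) {a b : ℝ} (ha : 0 ≤ a)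
    (hab : a < b) : ∃ x ∈ Ioo a b, profile V K b - profile V K a = (K - V' x) * (b - a) := by
  obtain ⟨x, hx, hslope⟩ := exists_hasDerivAt_eq_slope (profile V K) (fun u => K - V' u) hab
    ((h.continuousOn_profile K).mono fun u hu => ha.trans hu.1)
    (fun u hu => h.hasDerivAt_profile K (ha.trans_lt hu.1))
  exact ⟨x, hx, ((eq_div_iff (sub_pos.2 hab).ne').1 hslope).symm⟩

lemma min_lt_deriv (h : IsSigmoidal V V' UM) {a b x : ℝ} (ha : 0 ≤ a) (hx : x ∈ Ioo a b) :
    min (V' a) (V' b) < V' x := by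
  rcases le_total x UM with hxU | hUx
  · exact min_lt_of_left_lt <| h.strictMonoOn_deriv ⟨ha, hx.1.le.trans hxU⟩
      ⟨ha.trans hx.1.le, hxU⟩ hx.1
  · exact min_lt_of_right_lt <| h.strictAntiOn_deriv hUx (hUx.trans hx.2.le) hx.2

lemma ordConnected_lowerArc (h : IsSigmoidal V V' UM) (K : ℝ) :
    (lowerArc V' UM K).OrdConnected :=
  ordConnected_of_Ioo fun _ ha _ hb _ x hx =>
    have hxU : x ∈ Icc 0 UM := ⟨ha.1.1.trans hx.1.le, hx.2.le.trans hb.1.2⟩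
    ⟨hxU, (h.strictMonoOn_deriv hxU hb.1 hx.2).le.trans hb.2⟩

lemma ordConnected_middleArc (h : IsSigmoidal V V' UM) (K : ℝ) :
    (middleArc V' K).OrdConnected :=
  ordConnected_of_Ioo fun _ ha _ hb _ _ hx =>
    ⟨ha.1.trans hx.1.le, (le_min ha.2 hb.2).trans (h.min_lt_deriv ha.1 hx).le⟩

lemma ordConnected_upperArc (h : IsSigmoidal V V' UM) (K : ℝ) :
    (upperArc V' UM K).OrdConnected :=
  ordConnected_of_Ioo fun _ ha _ _ _ x hx =>
    have hUx : UM ≤ x := ha.1.trans hx.1.le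
    ⟨hUx, (h.strictAntiOn_deriv ha.1 hUx hx.1).le.trans ha.2⟩

lemma strictMonoOn_profile_lowerArc (h : IsSigmoidal V V' UM) (K : ℝ) :
    StrictMonoOn (profile V K) (lowerArc V' UM K) := by
  intro a ha b hb hab
  obtain ⟨x, hx, hsub⟩ := h.exists_profile_sub_eq K ha.1.1 hab
  have hxK : V' x < K :=
    (h.strictMonoOn_deriv ⟨ha.1.1.trans hx.1.le, hx.2.le.trans hb.1.2⟩ hb.1 hx.2).trans_le hb.2
  exact sub_pos.1 (hsub ▸ mul_pos (sub_pos.2 hxK) (sub_pos.2 hab))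

lemma strictAntiOn_profile_middleArc (h : IsSigmoidal V V' UM) (K : ℝ) :
    StrictAntiOn (profile V K) (middleArc V' K) := by
  intro a ha b hb hab
  obtain ⟨x, hx, hsub⟩ := h.exists_profile_sub_eq K ha.1 hab
  have hKx : K < V' x := (le_min ha.2 hb.2).trans_lt (h.min_lt_deriv ha.1 hx)
  exact sub_neg.1 (hsub ▸ mul_neg_of_neg_of_pos (sub_neg.2 hKx) (sub_pos.2 hab))

lemma strictMonoOn_profile_upperArc (h : IsSigmoidal V V' UM) (K : ℝ) :
    StrictMonoOn (profile V K) (upperArc V' UM K) := by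
  intro a ha b _ hab
  obtain ⟨x, hx, hsub⟩ := h.exists_profile_sub_eq K (h.inflection_pos.le.trans ha.1) hab
  have hxK : V' x < K := (h.strictAntiOn_deriv ha.1 (ha.1.trans hx.1.le) hx.1).trans_le ha.2
  exact sub_pos.1 (hsub ▸ mul_pos (sub_pos.2 hxK) (sub_pos.2 hab))

lemma notMem_lowerArc_of_profile_le (h : IsSigmoidal V V' UM) {K a b : ℝ} (ha : 0 ≤ a)
    (hab : a < b) (hle : profile V K b ≤ profile V K a) : b ∉ lowerArc V' UM K := fun hb =>
  have haU : a ∈ Icc 0 UM := ⟨ha, hab.le.trans hb.1.2⟩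
  have haK : V' a ≤ K := (h.strictMonoOn_deriv haU hb.1 hab).le.trans hb.2
  (h.strictMonoOn_profile_lowerArc K ⟨haU, haK⟩ hb hab).not_ge hle

lemma notMem_upperArc_of_profile_le (h : IsSigmoidal V V' UM) {K a b : ℝ}
    (hab : a < b) (hle : profile V K b ≤ profile V K a) : a ∉ upperArc V' UM K := fun ha =>
  have hUb : UM ≤ b := ha.1.trans hab.le
  have hbK : V' b ≤ K := (h.strictAntiOn_deriv ha.1 hUb hab).le.trans ha.2
  (h.strictMonoOn_profile_upperArc K ha ⟨hUb, hbK⟩ hab).not_ge hle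

lemma continuousOn_deriv_snd (h : IsSigmoidal V V' UM) {s : Set (ℝ × ℝ)}
    (hs : ∀ q ∈ s, 0 ≤ q.2) : ContinuousOn (fun q : ℝ × ℝ => V' q.2) s :=
  h.continuousOn_deriv.comp continuousOn_snd hs

lemma isOpen_lowerRegion (h : IsSigmoidal V V' UM) : IsOpen (lowerRegion V' UM) :=
  ((h.continuousOn_deriv_snd fun _ hq => hq.1.le).prodMk continuousOn_fst).isOpen_inter_preimage
    (isOpen_Ioo.preimage continuous_snd) isOpen_lt_prod

lemma isOpen_middleRegion (h : IsSigmoidal V V' UM) : IsOpen (middleRegion V') :=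
  (continuousOn_fst.prodMk (h.continuousOn_deriv_snd fun _ hq => hq.le)).isOpen_inter_preimage
    (isOpen_Ioi.preimage continuous_snd) isOpen_lt_prod

lemma isOpen_upperRegion (h : IsSigmoidal V V' UM) : IsOpen (upperRegion V' UM) :=
  ((h.continuousOn_deriv_snd fun _ hq => h.inflection_pos.le.trans hq.le).prodMk
    continuousOn_fst).isOpen_inter_preimage (isOpen_Ioi.preimage continuous_snd) isOpen_lt_prod

lemma contDiffOn_one (h : IsSigmoidal V V' UM) : ContDiffOn ℝ 1 V (Ioi 0) := by
  rw [contDiffOn_one_iff_derivWithin isOpen_Ioi.uniqueDiffOn]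
  refine ⟨fun u hu => (h.hasDerivAt hu).differentiableAt.differentiableWithinAt,
    (h.continuousOn_deriv.mono Ioi_subset_Ici_self).congr fun u hu => ?_⟩
  rw [derivWithin_of_isOpen isOpen_Ioi hu, (h.hasDerivAt hu).deriv]

lemma contDiffOn_levelMap (h : IsSigmoidal V V' UM) :
    ContDiffOn ℝ 1 (levelMap V) {q | 0 < q.2} :=
  contDiffOn_fst.prodMk ((contDiffOn_fst.mul contDiffOn_snd).sub
    (h.contDiffOn_one.comp contDiffOn_snd fun _ hq => hq))

/-- The derivative of `levelMap` is triangular, with diagonal entries `1` and `K - V' u`. -/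
lemma exists_equiv_hasFDerivAt_levelMap (h : IsSigmoidal V V' UM) {q : ℝ × ℝ} (hq : 0 < q.2)
    (hne : V' q.2 ≠ q.1) :
    ∃ e : (ℝ × ℝ) ≃L[ℝ] ℝ × ℝ, HasFDerivAt (levelMap V) (e : ℝ × ℝ →L[ℝ] ℝ × ℝ) q := by
  have hprofile : HasFDerivAt (fun q : ℝ × ℝ => profile V q.1 q.2) _ q :=
    (hasFDerivAt_fst.mul hasFDerivAt_snd).sub
      ((h.hasDerivAt hq).hasFDerivAt.comp q hasFDerivAt_snd)
  refine ⟨(ContinuousLinearEquiv.refl ℝ ℝ).skewProd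
    (ContinuousLinearEquiv.unitsEquivAut ℝ (Units.mk0 (q.1 - V' q.2) (sub_ne_zero.2 hne.symm)))
    (ContinuousLinearMap.toSpanSingleton ℝ q.2), (hasFDerivAt_fst.prodMk hprofile).congr_fderiv ?_⟩
  ext <;> simp

lemma contDiffOn_of_isZeroBranch (h : IsSigmoidal V V' UM) {R S : Set (ℝ × ℝ)}
    {u : ℝ → ℝ → ℝ} (hR : IsOpen R) (hpos : ∀ q ∈ R, 0 < q.2) (hne : ∀ q ∈ R, V' q.2 ≠ q.1)
    (hinj : ∀ K, InjOn (profile V K) {u | (K, u) ∈ R}) (hu : IsZeroBranch V R S u) :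
    ContDiffOn ℝ 1 (fun p : ℝ × ℝ => u p.1 p.2) S := by
  have hinj' : InjOn (levelMap V) R := by
    rintro ⟨K, a⟩ ha ⟨L, b⟩ hb hab
    obtain ⟨rfl, hprofile⟩ := Prod.mk.inj hab
    exact congrArg (Prod.mk K) (hinj K ha hb hprofile)
  have hinverse : ContDiffOn ℝ 1 (fun p : ℝ × ℝ => (p.1, u p.1 p.2)) S :=
    contDiffOn_of_rightInverse one_ne_zero hR (h.contDiffOn_levelMap.mono hpos)
      (fun q hq => h.exists_equiv_hasFDerivAt_levelMap (hpos q hq) (hne q hq)) hinj'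
      (fun p hp => (hu p.1 p.2 hp).1) fun p hp => Prod.ext rfl (hu p.1 p.2 hp).2
  exact contDiff_snd.comp_contDiffOn hinverse

lemma mem_lowerRegion_of_profile_eq (h : IsSigmoidal V V' UM) {K a b : ℝ} (ha : 0 < a)
    (hab : a < b) (hb : (K, b) ∈ middleRegion V') (heq : profile V K a = profile V K b) :
    (K, a) ∈ lowerRegion V' UM := by
  have ha_mid : a ∉ middleArc V' K := fun ha' => hab.ne <|
    (h.strictAntiOn_profile_middleArc K).injOn ha' (middleRegion_slice_subset K hb) heq
  have ha_up : a ∉ upperArc V' UM K := h.notMem_upperArc_of_profile_le hab heq.ge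
  have haK : V' a < K := lt_of_not_ge fun hK => ha_mid ⟨ha.le, hK⟩
  exact ⟨⟨ha, lt_of_not_ge fun hU => ha_up ⟨hU, haK.le⟩⟩, haK⟩

lemma mem_upperRegion_of_profile_eq (h : IsSigmoidal V V' UM) {K a b : ℝ}
    (ha : (K, a) ∈ middleRegion V') (hab : a < b) (heq : profile V K a = profile V K b) :
    (K, b) ∈ upperRegion V' UM := by
  have ha_mid : a ∈ middleArc V' K := middleRegion_slice_subset K ha
  have hb : 0 ≤ b := ha_mid.1.trans hab.le
  have hb_mid : b ∉ middleArc V' K := fun hb' => hab.ne <|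
    (h.strictAntiOn_profile_middleArc K).injOn ha_mid hb' heq
  have hb_low : b ∉ lowerArc V' UM K := h.notMem_lowerArc_of_profile_le ha_mid.1 hab heq.ge
  have hbK : V' b < K := lt_of_not_ge fun hK => hb_mid ⟨hb, hK⟩
  exact ⟨lt_of_not_ge fun hU => hb_low ⟨⟨hb, hU⟩, hbK.le⟩, hbK⟩

lemma mem_middleRegion_of_profile_le (h : IsSigmoidal V V' UM) {K a b d : ℝ} (ha : 0 ≤ a)
    (hab : a < b) (hbd : b < d) (hle_ab : profile V K b ≤ profile V K a)
    (hle_bd : profile V K d ≤ profile V K b) : (K, b) ∈ middleRegion V' := by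
  have hb : 0 < b := ha.trans_lt hab
  refine ⟨hb, lt_of_not_ge fun hK => ?_⟩
  rcases le_total b UM with hU | hU
  · exact h.notMem_lowerArc_of_profile_le ha hab hle_ab ⟨⟨hb.le, hU⟩, hK⟩
  · exact h.notMem_upperArc_of_profile_le hbd hle_bd ⟨hU, hK⟩

end IsSigmoidal

section ZeroBranches

variable {V V' : ℝ → ℝ} {UM K₁ : ℝ} {uMx umx : ℝ → ℝ} {R S T : Set (ℝ × ℝ)}
  {u u1f u0f u2f : ℝ → ℝ → ℝ} {l : Filter ℝ} {K c x u₁ u₀ u₂ : ℝ}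

lemma ZerosD1.mem_regions (hz : ZerosD1 V K c u₁ u₀ u₂) (h : IsSigmoidal V V' UM) (hK : K ≠ 0) :
    ((K, u₁) ∈ lowerRegion V' UM ∧ profile V K u₁ = c) ∧
      ((K, u₀) ∈ middleRegion V' ∧ profile V K u₀ = c) ∧
      ((K, u₂) ∈ upperRegion V' UM ∧ profile V K u₂ = c) := by
  obtain ⟨h₁, h₁₀, h₀₂, e₁, e₀, e₂, -⟩ := hz
  rw [fTV_eq_zero_iff hK] at e₁ e₀ e₂
  have hmid : (K, u₀) ∈ middleRegion V' := h.mem_middleRegion_of_profile_le h₁.le h₁₀ h₀₂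
    (e₀.trans e₁.symm).le (e₂.trans e₀.symm).le
  exact ⟨⟨h.mem_lowerRegion_of_profile_eq h₁ h₁₀ hmid (e₁.trans e₀.symm), e₁⟩, ⟨hmid, e₀⟩,
    h.mem_upperRegion_of_profile_eq hmid h₀₂ (e₀.trans e₂.symm), e₂⟩

lemma ZerosD2.mem_regions (hz : ZerosD2 V K c u₀ u₂) (h : IsSigmoidal V V' UM) (hK : K ≠ 0)
    (hc : c ≤ c0v V) :
    ((K, u₀) ∈ middleRegion V' ∧ profile V K u₀ = c) ∧
      ((K, u₂) ∈ upperRegion V' UM ∧ profile V K u₂ = c) := by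
  obtain ⟨h₀, h₀₂, e₀, e₂, -⟩ := hz
  rw [fTV_eq_zero_iff hK] at e₀ e₂
  have hmid : (K, u₀) ∈ middleRegion V' := h.mem_middleRegion_of_profile_le le_rfl h₀ h₀₂
    (e₀.trans_le (hc.trans_eq (c0v_eq_profile_zero V K))) (e₂.trans e₀.symm).le
  exact ⟨⟨hmid, e₀⟩, h.mem_upperRegion_of_profile_eq hmid h₀₂ (e₀.trans e₂.symm), e₂⟩

lemma isZeroBranch_D1 (h : IsSigmoidal V V' UM)
    (hz : ∀ K c, (K, c) ∈ D1 V V' UM uMx umx → ZerosD1 V K c (u1f K c) (u0f K c) (u2f K c)) :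
    IsZeroBranch V (lowerRegion V' UM) (D1 V V' UM uMx umx) u1f ∧
      IsZeroBranch V (middleRegion V') (D1 V V' UM uMx umx) u0f ∧
      IsZeroBranch V (upperRegion V' UM) (D1 V V' UM uMx umx) u2f := by
  have hmem K c (hD : (K, c) ∈ D1 V V' UM uMx umx) :=
    (hz K c hD).mem_regions h (h.deriv_zero_nonneg.trans_lt hD.1).ne'
  exact ⟨fun K c hD => (hmem K c hD).1, fun K c hD => (hmem K c hD).2.1,
    fun K c hD => (hmem K c hD).2.2⟩

lemma isZeroBranch_D2 (h : IsSigmoidal V V' UM)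
    (hz : ∀ K c, (K, c) ∈ D2 V V' umx K₁ → ZerosD2 V K c (u0f K c) (u2f K c)) :
    IsZeroBranch V (middleRegion V') (D2 V V' umx K₁) u0f ∧
      IsZeroBranch V (upperRegion V' UM) (D2 V V' umx K₁) u2f := by
  have hD2 K c (hD : (K, c) ∈ D2 V V' umx K₁) : 0 < K ∧ c ≤ c0v V := by
    rcases hD with ⟨hK, -, hc⟩ | ⟨hK, -, -, hc⟩
    · exact ⟨h.deriv_zero_nonneg.trans_lt hK, hc.le⟩
    · exact ⟨hK, hc.le⟩
  have hmem K c (hD : (K, c) ∈ D2 V V' umx K₁) :=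
    (hz K c hD).mem_regions h (hD2 K c hD).1.ne' (hD2 K c hD).2
  exact ⟨fun K c hD => (hmem K c hD).1, fun K c hD => (hmem K c hD).2⟩

lemma IsZeroBranch.union (hS : IsZeroBranch V R S u) (hT : IsZeroBranch V R T u) :
    IsZeroBranch V R (S ∪ T) u :=
  fun K c hc => hc.elim (hS K c) (hT K c)

lemma IsZeroBranch.tendsto_profile (hu : IsZeroBranch V R S u) (hl : l ≤ nhds c)
    (hS : ∀ᶠ c in l, (K, c) ∈ S) : Tendsto (fun c => profile V K (u K c)) l (nhds c) :=
  (tendsto_id.mono_right hl).congr' (hS.mono fun c hc => (hu K c hc).2.symm)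

lemma IsZeroBranch.tendsto_of_mem_lowerArc (hu : IsZeroBranch V (lowerRegion V' UM) S u)
    (h : IsSigmoidal V V' UM) (hx : x ∈ lowerArc V' UM K) (hl : l ≤ nhds (profile V K x))
    (hS : ∀ᶠ c in l, (K, c) ∈ S) : Tendsto (u K) l (nhds x) :=
  tendsto_nhds_of_strictMonoOn (h.ordConnected_lowerArc K) (h.strictMonoOn_profile_lowerArc K) hx
    (hS.mono fun c hc => lowerRegion_slice_subset K (hu K c hc).1) (hu.tendsto_profile hl hS)

lemma IsZeroBranch.tendsto_of_mem_middleArc (hu : IsZeroBranch V (middleRegion V') S u)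
    (h : IsSigmoidal V V' UM) (hx : x ∈ middleArc V' K) (hl : l ≤ nhds (profile V K x))
    (hS : ∀ᶠ c in l, (K, c) ∈ S) : Tendsto (u K) l (nhds x) :=
  tendsto_nhds_of_strictAntiOn (h.ordConnected_middleArc K) (h.strictAntiOn_profile_middleArc K)
    hx (hS.mono fun c hc => middleRegion_slice_subset K (hu K c hc).1) (hu.tendsto_profile hl hS)

lemma IsZeroBranch.tendsto_of_mem_upperArc (hu : IsZeroBranch V (upperRegion V' UM) S u)
    (h : IsSigmoidal V V' UM) (hx : x ∈ upperArc V' UM K) (hl : l ≤ nhds (profile V K x))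
    (hS : ∀ᶠ c in l, (K, c) ∈ S) : Tendsto (u K) l (nhds x) :=
  tendsto_nhds_of_strictMonoOn (h.ordConnected_upperArc K) (h.strictMonoOn_profile_upperArc K) hx
    (hS.mono fun c hc => upperRegion_slice_subset K (hu K c hc).1) (hu.tendsto_profile hl hS)

lemma IsZeroBranch.contDiffOn_lower (hu : IsZeroBranch V (lowerRegion V' UM) S u)
    (h : IsSigmoidal V V' UM) : ContDiffOn ℝ 1 (fun p : ℝ × ℝ => u p.1 p.2) S :=
  h.contDiffOn_of_isZeroBranch h.isOpen_lowerRegion (fun _ hq => hq.1.1) (fun _ hq => hq.2.ne)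
    (fun K => (h.strictMonoOn_profile_lowerArc K).injOn.mono (lowerRegion_slice_subset K)) hu

lemma IsZeroBranch.contDiffOn_middle (hu : IsZeroBranch V (middleRegion V') S u)
    (h : IsSigmoidal V V' UM) : ContDiffOn ℝ 1 (fun p : ℝ × ℝ => u p.1 p.2) S :=
  h.contDiffOn_of_isZeroBranch h.isOpen_middleRegion (fun _ hq => hq.1) (fun _ hq => hq.2.ne')
    (fun K => (h.strictAntiOn_profile_middleArc K).injOn.mono (middleRegion_slice_subset K)) hu

lemma IsZeroBranch.contDiffOn_upper (hu : IsZeroBranch V (upperRegion V' UM) S u)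
    (h : IsSigmoidal V V' UM) : ContDiffOn ℝ 1 (fun p : ℝ × ℝ => u p.1 p.2) S :=
  h.contDiffOn_of_isZeroBranch h.isOpen_upperRegion (fun _ hq => h.inflection_pos.trans hq.1)
    (fun _ hq => hq.2.ne)
    (fun K => (h.strictMonoOn_profile_upperArc K).injOn.mono (upperRegion_slice_subset K)) hu

lemma UMaxHyp.mem_lowerArc (huMx : UMaxHyp V' UM uMx) (h0 : V' 0 < K) (hM : K < V' UM) :
    uMx K ∈ lowerArc V' UM K :=
  ⟨Ioo_subset_Icc_self (huMx K h0 hM).1, (huMx K h0 hM).2.le⟩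

lemma UMaxHyp.mem_middleArc (huMx : UMaxHyp V' UM uMx) (h0 : V' 0 < K) (hM : K < V' UM) :
    uMx K ∈ middleArc V' K :=
  ⟨(huMx K h0 hM).1.1.le, (huMx K h0 hM).2.ge⟩

lemma UMinHyp.mem_middleArc (humx : UMinHyp V' UM umx) (h : IsSigmoidal V V' UM) (h0 : 0 < K)
    (hM : K < V' UM) : umx K ∈ middleArc V' K :=
  ⟨(h.inflection_pos.trans (humx K h0 hM).1).le, (humx K h0 hM).2.ge⟩

lemma UMinHyp.mem_upperArc (humx : UMinHyp V' UM umx) (h0 : 0 < K) (hM : K < V' UM) :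
    umx K ∈ upperArc V' UM K :=
  ⟨(humx K h0 hM).1.le, (humx K h0 hM).2.le⟩

lemma c1f_lt_cMf (h : IsSigmoidal V V' UM) (huMx : UMaxHyp V' UM uMx)
    (humx : UMinHyp V' UM umx) (h0 : V' 0 < K) (hM : K < V' UM) :
    c1f V umx K < cMf V uMx K := by
  have hK : 0 < K := h.deriv_zero_nonneg.trans_lt h0
  have huM : uMx K ∈ Ioo 0 UM := (huMx K h0 hM).1
  refine max_lt ?_ ?_
  · rw [c0v_eq_profile_zero V K]
    exact h.strictMonoOn_profile_lowerArc K ⟨⟨le_rfl, h.inflection_pos.le⟩, h0.le⟩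
      (huMx.mem_lowerArc h0 hM) huM.1
  · exact h.strictAntiOn_profile_middleArc K (huMx.mem_middleArc h0 hM)
      (humx.mem_middleArc h hK hM) (huM.2.trans (humx K hK hM).1)

lemma eventually_mem_D1 (h : IsSigmoidal V V' UM) (huMx : UMaxHyp V' UM uMx)
    (humx : UMinHyp V' UM umx) (h0 : V' 0 < K) (hM : K < V' UM) :
    ∀ᶠ c in nhdsWithin (cMf V uMx K) (Iio (cMf V uMx K)), (K, c) ∈ D1 V V' UM uMx umx := by
  filter_upwards [Ioo_mem_nhdsLT (c1f_lt_cMf h huMx humx h0 hM)] with c hc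
  exact ⟨h0, hM, hc⟩

lemma eventually_mem_D1_union_D2 (h : IsSigmoidal V V' UM) (huMx : UMaxHyp V' UM uMx)
    (humx : UMinHyp V' UM umx) (hK₁ : K1Hyp V V' UM umx K₁) (hK : 0 < K) (hM : K < V' UM) :
    ∀ᶠ c in nhdsWithin (cmf V umx K) (Ioi (cmf V umx K)),
      (K, c) ∈ D1 V V' UM uMx umx ∪ D2 V V' umx K₁ := by
  obtain ⟨h0K₁, -, hlt, heq, hgt⟩ := hK₁
  rcases lt_or_ge K K₁ with hKK₁ | hK₁K
  · filter_upwards [Ioo_mem_nhdsGT (hlt K hK hKK₁)] with c hc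
    exact .inr (.inr ⟨hK, hKK₁, hc⟩)
  · have hle : c0v V ≤ cmf V umx K := by
      rcases hK₁K.eq_or_lt with rfl | hK₁K
      · exact heq.ge
      · exact (hgt K hK₁K hM).le
    have h0 : V' 0 < K := h0K₁.trans_le hK₁K
    have hc1 : c1f V umx K = cmf V umx K := max_eq_right hle
    filter_upwards [Ioo_mem_nhdsGT (hc1 ▸ c1f_lt_cMf h huMx humx h0 hM)] with c hc
    exact .inl ⟨h0, hM, hc1.trans_lt hc.1, hc.2⟩

end ZeroBranches

theorem stmt11_general
    (V V' : ℝ → ℝ) (UM K₁ : ℝ) (uMx umx : ℝ → ℝ)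
    (u1f u0f u2f : ℝ → ℝ → ℝ)
    (hV : IsSigmoidal V V' UM)
    (huMx : UMaxHyp V' UM uMx) (humx : UMinHyp V' UM umx)
    (hK1 : K1Hyp V V' UM umx K₁)
    (hzD1 : ∀ K c, (K, c) ∈ D1 V V' UM uMx umx →
      ZerosD1 V K c (u1f K c) (u0f K c) (u2f K c))
    (hzD2 : ∀ K c, (K, c) ∈ D2 V V' umx K₁ → ZerosD2 V K c (u0f K c) (u2f K c)) :
    ContDiffOn ℝ 1 (fun p : ℝ × ℝ => u1f p.1 p.2) (D1 V V' UM uMx umx) ∧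
    ContDiffOn ℝ 1 (fun p : ℝ × ℝ => u0f p.1 p.2)
      (D1 V V' UM uMx umx ∪ D2 V V' umx K₁) ∧
    ContDiffOn ℝ 1 (fun p : ℝ × ℝ => u2f p.1 p.2)
      (D1 V V' UM uMx umx ∪ D2 V V' umx K₁) ∧
    (∀ K, V' 0 < K → K < V' UM →
      Tendsto (fun cc => u0f K cc)
        (nhdsWithin (cMf V uMx K) (Iio (cMf V uMx K))) (nhds (uMx K)) ∧
      Tendsto (fun cc => u1f K cc)
        (nhdsWithin (cMf V uMx K) (Iio (cMf V uMx K))) (nhds (uMx K))) ∧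
    (∀ K, 0 < K → K < V' UM →
      Tendsto (fun cc => u0f K cc)
        (nhdsWithin (cmf V umx K) (Ioi (cmf V umx K))) (nhds (umx K)) ∧
      Tendsto (fun cc => u2f K cc)
        (nhdsWithin (cmf V umx K) (Ioi (cmf V umx K))) (nhds (umx K))) := by
  obtain ⟨hu1, hu0, hu2⟩ := isZeroBranch_D1 hV hzD1
  obtain ⟨hu0', hu2'⟩ := isZeroBranch_D2 hV hzD2
  refine ⟨hu1.contDiffOn_lower hV, (hu0.union hu0').contDiffOn_middle hV,
    (hu2.union hu2').contDiffOn_upper hV, fun K h0 hM => ?_, fun K hK hM => ?_⟩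
  · have hD := eventually_mem_D1 hV huMx humx h0 hM
    exact ⟨hu0.tendsto_of_mem_middleArc hV (huMx.mem_middleArc h0 hM) nhdsWithin_le_nhds hD,
      hu1.tendsto_of_mem_lowerArc hV (huMx.mem_lowerArc h0 hM) nhdsWithin_le_nhds hD⟩
  · have hD := eventually_mem_D1_union_D2 hV huMx humx hK1 hK hM
    exact ⟨(hu0.union hu0').tendsto_of_mem_middleArc hV (humx.mem_middleArc hV hK hM)
        nhdsWithin_le_nhds hD,
      (hu2.union hu2').tendsto_of_mem_upperArc hV (humx.mem_upperArc hK hM)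
        nhdsWithin_le_nhds hD⟩

theorem stmt11
    (V V' V'' : ℝ → ℝ) (UM K₁ : ℝ) (uMx umx : ℝ → ℝ)
    (u1f u0f u2f : ℝ → ℝ → ℝ)
    (hA1 : A1 V V' V'' UM)
    (huMx : UMaxHyp V' UM uMx) (humx : UMinHyp V' UM umx)
    (hK1 : K1Hyp V V' UM umx K₁)
    (hzD1 : ∀ K c, (K, c) ∈ D1 V V' UM uMx umx →
      ZerosD1 V K c (u1f K c) (u0f K c) (u2f K c))
    (hzD2 : ∀ K c, (K, c) ∈ D2 V V' umx K₁ → ZerosD2 V K c (u0f K c) (u2f K c)) :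
    ContDiffOn ℝ 1 (fun p : ℝ × ℝ => u1f p.1 p.2) (D1 V V' UM uMx umx) ∧
    ContDiffOn ℝ 1 (fun p : ℝ × ℝ => u0f p.1 p.2)
      (D1 V V' UM uMx umx ∪ D2 V V' umx K₁) ∧
    ContDiffOn ℝ 1 (fun p : ℝ × ℝ => u2f p.1 p.2)
      (D1 V V' UM uMx umx ∪ D2 V V' umx K₁) ∧
    (∀ K, V' 0 < K → K < V' UM →
      Tendsto (fun cc => u0f K cc)
        (nhdsWithin (cMf V uMx K) (Iio (cMf V uMx K))) (nhds (uMx K)) ∧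
      Tendsto (fun cc => u1f K cc)
        (nhdsWithin (cMf V uMx K) (Iio (cMf V uMx K))) (nhds (uMx K))) ∧
    (∀ K, 0 < K → K < V' UM →
      Tendsto (fun cc => u0f K cc)
        (nhdsWithin (cmf V umx K) (Ioi (cmf V umx K))) (nhds (umx K)) ∧
      Tendsto (fun cc => u2f K cc)
        (nhdsWithin (cmf V umx K) (Ioi (cmf V umx K))) (nhds (umx K))) :=
  stmt11_general V V' UM K₁ uMx umx u1f u0f u2f hA1.isSigmoidal huMx humx hK1 hzD1 hzD2

end TrafficTW
end
end

section
/- Let (K,c) ∈ D₁ ∪ D₂ and let (u,w) be a solution of (TV) with u > 0 satisfying condition (HO) with level ū = u₁ or ū = u₂ for some μ ∈ ℝ. Set m̲ = inf_{z∈ℝ} u(z) and m̄ = sup_{z∈ℝ} u(z). Then −sup_{u∈(m̲,m̄)} f'(u) < μ < −inf_{u∈(m̲,m̄)} f'(u); equivalently, the function u ↦ h(u,μ) = f'(u) + μ takes both positive and negative values on (m̲,m̄). -/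
open Set Filter MeasureTheory

noncomputable section

namespace TrafficTW

section Calculus

/-!
Since `g₂ > 0`, (TV) is a Liénard system `u' = w`, `w' = P(u) + Q(u) w` in which `Q = g₂ h` has the
sign of `h`. The energy `w²/2 - ∫ P` has derivative `Q(u) w²` along a solution and, on a homoclinic
orbit, the same limit at both ends. Hence `Q(u) w²` takes both signs unless it vanishes identically;
in the latter case `Q(u) u' = 0`, so any primitive of `Q` is constant on the range of `u` and `Q`
vanishes inside it. For (TV) this would make `V'` constant on an interval, contrary to (A1).
-/

theorem exists_forall_hasDerivAt_of_continuousOn {E : Type*} [NormedAddCommGroup E]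
    [NormedSpace ℝ E] [CompleteSpace E] {f : ℝ → E} {I : Set ℝ} (hI : IsOpen I)
    (hI' : I.OrdConnected) (hf : ContinuousOn f I) :
    ∃ F : ℝ → E, ∀ x ∈ I, HasDerivAt F (f x) x := by
  rcases I.eq_empty_or_nonempty with rfl | ⟨a, ha⟩
  · exact ⟨0, fun x hx => hx.elim⟩
  · exact ⟨fun x => ∫ t in a..x, f t, fun x hx =>
      intervalIntegral.integral_hasDerivAt_right
        (hf.mono (hI'.uIcc_subset ha hx)).intervalIntegrable
        (hf.stronglyMeasurableAtFilter hI x hx) (hf.continuousAt (hI.mem_nhds hx))⟩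

theorem nontrivial_image_of_hasDerivAt_ne_zero {𝕜 E : Type*} [NontriviallyNormedField 𝕜]
    [NormedAddCommGroup E] [NormedSpace 𝕜 E] {f : 𝕜 → E} {f' : E} {x : 𝕜} {s : Set 𝕜}
    (hs : s ∈ nhds x) (hf : HasDerivAt f f' x) (hf' : f' ≠ 0) : (f '' s).Nontrivial := by
  by_contra hsub
  rw [not_nontrivial_iff] at hsub
  have hconst : f =ᶠ[nhds x] fun _ => f x :=
    mem_of_superset hs fun y hy =>
      hsub (mem_image_of_mem f hy) (mem_image_of_mem f (mem_of_mem_nhds hs))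
  exact hf' ((hf.congr_of_eventuallyEq hconst.symm).unique (hasDerivAt_const x (f x)))

theorem mem_Ioo_sInf_sSup_range_of_hasDerivAt_ne_zero {u : ℝ → ℝ} {u' z : ℝ}
    (hb : BddBelow (range u)) (ha : BddAbove (range u)) (hu : HasDerivAt u u' z) (hu' : u' ≠ 0) :
    u z ∈ Ioo (sInf (range u)) (sSup (range u)) := by
  have hinf : ∀ y, sInf (range u) ≤ u y := fun y => csInf_le hb (mem_range_self y)
  have hsup : ∀ y, u y ≤ sSup (range u) := fun y => le_csSup ha (mem_range_self y)
  refine ⟨(hinf z).lt_of_ne fun h => hu' ?_, (hsup z).lt_of_ne fun h => hu' ?_⟩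
  · exact IsLocalMin.hasDerivAt_eq_zero (Eventually.of_forall fun y => h ▸ hinf y) hu
  · exact IsLocalMax.hasDerivAt_eq_zero (Eventually.of_forall fun y => h ▸ hsup y) hu

theorem isBounded_range_of_tendsto_cocompact {X Y : Type*} [TopologicalSpace X]
    [PseudoMetricSpace Y] {u : X → Y} {L : Y} (hu : Continuous u)
    (hL : Tendsto u (cocompact X) (nhds L)) : Bornology.IsBounded (range u) :=
  (hL.isCompact_insert_range_of_cocompact hu).isBounded.subset (subset_insert L (range u))

theorem exists_hasDerivAt_pos_of_tendsto_cocompact {F F' : ℝ → ℝ} {L : ℝ}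
    (hF : ∀ z, HasDerivAt F (F' z) z) (hL : Tendsto F (cocompact ℝ) (nhds L))
    (hne : ∃ z, F' z ≠ 0) : ∃ z, 0 < F' z := by
  by_contra! hnonpos
  have hanti : Antitone F := antitone_of_hasDerivAt_nonpos hF hnonpos
  rw [cocompact_eq_atBot_atTop, tendsto_sup] at hL
  have hconst : F = fun _ => L :=
    funext fun z => (hanti.ge_of_tendsto hL.1 z).antisymm (hanti.le_of_tendsto hL.2 z)
  obtain ⟨z, hz⟩ := hne
  exact hz ((hF z).unique (hconst ▸ hasDerivAt_const z L))

theorem exists_hasDerivAt_neg_of_tendsto_cocompact {F F' : ℝ → ℝ} {L : ℝ}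
    (hF : ∀ z, HasDerivAt F (F' z) z) (hL : Tendsto F (cocompact ℝ) (nhds L))
    (hne : ∃ z, F' z ≠ 0) : ∃ z, F' z < 0 := by
  simpa only [neg_pos] using exists_hasDerivAt_pos_of_tendsto_cocompact
    (fun z => (hF z).fun_neg) hL.neg (by simpa only [ne_eq, neg_eq_zero] using hne)

theorem eq_zero_of_comp_mul_deriv_eq_zero {Q u u' : ℝ → ℝ} {I : Set ℝ} (hI : IsOpen I)
    (hI' : I.OrdConnected) (hQ : ContinuousOn Q I) (hu : ∀ z, HasDerivAt u (u' z) z)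
    (huI : ∀ z, u z ∈ I) (h0 : ∀ z, Q (u z) * u' z = 0) {x : ℝ} (hx : range u ∈ nhds x) :
    Q x = 0 := by
  obtain ⟨Φ, hΦ⟩ := exists_forall_hasDerivAt_of_continuousOn hI hI' hQ
  have hΦu : ∀ z, HasDerivAt (Φ ∘ u) 0 z := fun z => by
    simpa only [h0] using (hΦ (u z) (huI z)).comp z (hu z)
  have hconst : ∀ y z, Φ (u y) = Φ (u z) :=
    is_const_of_deriv_eq_zero (fun z => (hΦu z).differentiableAt) fun z => (hΦu z).deriv
  have hΦ_range : (Φ '' range u).Subsingleton := by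
    rintro _ ⟨_, ⟨y, rfl⟩, rfl⟩ _ ⟨_, ⟨z, rfl⟩, rfl⟩
    exact hconst y z
  have hxI : x ∈ I := range_subset_iff.2 huI (mem_of_mem_nhds hx)
  by_contra hQx
  exact (nontrivial_image_of_hasDerivAt_ne_zero hx (hΦ x hxI) hQx).not_subsingleton hΦ_range

end Calculus

section Lienard

variable {P Q G u w : ℝ → ℝ} {I : Set ℝ} {ub : ℝ}

/-- `(u, w)` solves the Liénard system `u' = w`, `w' = P(u) + Q(u) w` on the whole line; (TV) is
the case `P = g₁ f`, `Q = g₂ h`. -/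
structure IsLienardSol (P Q u w : ℝ → ℝ) : Prop where
  hasDerivAt_fst : ∀ z, HasDerivAt u (w z) z
  hasDerivAt_snd : ∀ z, HasDerivAt w (P (u z) + Q (u z) * w z) z

/-- The energy `w² / 2 - G(u)` along the curve `(u, w)`, where the potential `G` is meant to be a
primitive of `P`; it is conserved by a Liénard system without damping. -/
def lienardEnergy (G u w : ℝ → ℝ) (z : ℝ) : ℝ := w z ^ 2 / 2 - G (u z)

theorem tendsto_lienardEnergy {l : Filter ℝ} (hG : ContinuousAt G ub)
    (hu : Tendsto u l (nhds ub)) (hw : Tendsto w l (nhds 0)) :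
    Tendsto (lienardEnergy G u w) l (nhds (-G ub)) := by
  rw [show -G ub = 0 ^ 2 / 2 - G ub by ring]
  exact ((hw.pow 2).div_const 2).sub (hG.tendsto.comp hu)

namespace IsLienardSol

theorem hasDerivAt_lienardEnergy (h : IsLienardSol P Q u w) {z : ℝ}
    (hG : HasDerivAt G (P (u z)) (u z)) :
    HasDerivAt (lienardEnergy G u w) (Q (u z) * w z ^ 2) z := by
  refine ((((h.hasDerivAt_snd z).fun_pow 2).div_const 2).sub
    (hG.comp z (h.hasDerivAt_fst z))).congr_deriv ?_
  push_cast
  ring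

theorem continuous_fst (h : IsLienardSol P Q u w) : Continuous u :=
  continuous_iff_continuousAt.2 fun z => (h.hasDerivAt_fst z).continuousAt

theorem exists_damping_ne_zero (h : IsLienardSol P Q u w) (hI : IsOpen I) (hI' : I.OrdConnected)
    (hQ : ContinuousOn Q I) (huI : ∀ z, u z ∈ I) {x : ℝ} (hx : range u ∈ nhds x)
    (hQx : Q x ≠ 0) : ∃ z, Q (u z) * w z ^ 2 ≠ 0 := by
  by_contra! hzero
  have hQw : ∀ z, Q (u z) * w z = 0 := fun z => by
    simpa only [mul_eq_zero, pow_eq_zero_iff two_ne_zero] using hzero z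
  exact hQx (eq_zero_of_comp_mul_deriv_eq_zero hI hI' hQ h.hasDerivAt_fst huI hQw hx)

theorem exists_neg_and_exists_pos (h : IsLienardSol P Q u w) (hI : IsOpen I)
    (hI' : I.OrdConnected) (hP : ContinuousOn P I) (hQ : ContinuousOn Q I) (huI : ∀ z, u z ∈ I)
    (hub : ub ∈ I) (hu : Tendsto u (cocompact ℝ) (nhds ub)) (hw : Tendsto w (cocompact ℝ) (nhds 0))
    (hQne : ∃ x ∈ Ioo (sInf (range u)) (sSup (range u)), Q x ≠ 0) :
    (∃ a ∈ Ioo (sInf (range u)) (sSup (range u)), Q a < 0) ∧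
      ∃ b ∈ Ioo (sInf (range u)) (sSup (range u)), 0 < Q b := by
  obtain ⟨G, hG⟩ := exists_forall_hasDerivAt_of_continuousOn hI hI' hP
  have hE : ∀ z, HasDerivAt (lienardEnergy G u w) (Q (u z) * w z ^ 2) z :=
    fun z => h.hasDerivAt_lienardEnergy (hG (u z) (huI z))
  have hE_lim : Tendsto (lienardEnergy G u w) (cocompact ℝ) (nhds (-G ub)) :=
    tendsto_lienardEnergy (hG ub hub).continuousAt hu hw
  have hbdd := isBounded_range_of_tendsto_cocompact h.continuous_fst hu
  have hmem : ∀ {z}, w z ≠ 0 → u z ∈ Ioo (sInf (range u)) (sSup (range u)) := fun {z} hz =>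
    mem_Ioo_sInf_sSup_range_of_hasDerivAt_ne_zero hbdd.bddBelow hbdd.bddAbove
      (h.hasDerivAt_fst z) hz
  have hne : ∃ z, Q (u z) * w z ^ 2 ≠ 0 := by
    obtain ⟨x, hx, hQx⟩ := hQne
    have hrange : range u ∈ nhds x := mem_of_superset (Ioo_mem_nhds hx.1 hx.2)
      ((isConnected_range h.continuous_fst).Ioo_csInf_csSup_subset hbdd.bddBelow hbdd.bddAbove)
    exact h.exists_damping_ne_zero hI hI' hQ huI hrange hQx
  constructor
  · obtain ⟨z, hz⟩ := exists_hasDerivAt_neg_of_tendsto_cocompact hE hE_lim hne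
    exact ⟨u z, hmem fun hwz => by simp [hwz] at hz, neg_of_mul_neg_left hz (sq_nonneg _)⟩
  · obtain ⟨z, hz⟩ := exists_hasDerivAt_pos_of_tendsto_cocompact hE hE_lim hne
    exact ⟨u z, hmem fun hwz => by simp [hwz] at hz, pos_of_mul_pos_left hz (sq_nonneg _)⟩

end IsLienardSol

end Lienard

section TravelingWave

variable {V V' V'' κ u w : ℝ → ℝ} {τ UM K c μ ub : ℝ}

theorem IsTVSol.isLienardSol (h : IsTVSol V V' κ τ K c μ u w) :
    IsLienardSol (fun x => g1TV κ τ x * fTV V K c x) (fun x => g2TV κ τ x * hTV V' K μ x) u w :=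
  ⟨h.1, h.2⟩

theorem HO.tendsto_fst_cocompact (h : HO ub u w) : Tendsto u (cocompact ℝ) (nhds ub) :=
  cocompact_eq_atBot_atTop (α := ℝ) ▸ h.1.sup h.2.1

theorem HO.tendsto_snd_cocompact (h : HO ub u w) : Tendsto w (cocompact ℝ) (nhds 0) :=
  cocompact_eq_atBot_atTop (α := ℝ) ▸ h.2.2.1.sup h.2.2.2.1

theorem HO.exists_ne_zero (h : HO ub u w) (hu : ∀ z, HasDerivAt u (w z) z) : ∃ z, w z ≠ 0 := by
  obtain ⟨-, hu_top, -, -, hne⟩ := h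
  by_contra! hw
  have hconst : ∀ y z, u y = u z :=
    is_const_of_deriv_eq_zero (fun z => (hu z).differentiableAt) fun z => (hu z).deriv.trans (hw z)
  refine hne fun z => ⟨tendsto_nhds_unique ?_ hu_top, hw z⟩
  exact tendsto_const_nhds.congr (hconst z)

theorem continuousOn_fTV {s : Set ℝ} (hV : ContinuousOn V s) (K c : ℝ) :
    ContinuousOn (fTV V K c) s :=
  (((continuousOn_const.mul continuousOn_id).sub hV).sub continuousOn_const).div_const K

theorem continuousOn_fdTV {s : Set ℝ} (hV' : ContinuousOn V' s) (K : ℝ) :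
    ContinuousOn (fdTV V' K) s :=
  (continuousOn_const.sub hV').div_const K

theorem isBounded_fdTV_image_Ioo (hV' : ContinuousOn V' (Ioi 0)) (K : ℝ) (hu : Continuous u)
    (hpos : ∀ z, 0 < u z) (hub : 0 < ub) (hlim : Tendsto u (cocompact ℝ) (nhds ub)) :
    Bornology.IsBounded (fdTV V' K '' Ioo (sInf (range u)) (sSup (range u))) := by
  have hbdd := isBounded_range_of_tendsto_cocompact hu hlim
  have hIoo : Ioo (sInf (range u)) (sSup (range u)) ⊆ insert ub (range u) :=
    ((isConnected_range hu).Ioo_csInf_csSup_subset hbdd.bddBelow hbdd.bddAbove).trans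
      (subset_insert ub (range u))
  have himage : IsCompact (fdTV V' K '' insert ub (range u)) :=
    (hlim.isCompact_insert_range_of_cocompact hu).image_of_continuousOn
      ((continuousOn_fdTV hV' K).mono (insert_subset hub (range_subset_iff.2 hpos)))
  exact himage.isBounded.subset (image_mono hIoo)

theorem continuousOn_comp_one_div (hκ : ContinuousOn κ (Ioi 0)) :
    ContinuousOn (fun x => κ (1 / x)) (Ioi 0) :=
  hκ.comp (continuousOn_const.div continuousOn_id fun _ hx => (mem_Ioi.1 hx).ne')
    fun _ hx => mem_Ioi.2 (one_div_pos.2 hx)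

theorem continuousOn_g1TV (hκ : ContinuousOn κ (Ioi 0)) (hκ_pos : ∀ ρ, 0 < ρ → 0 < κ ρ)
    (hτ : 0 < τ) : ContinuousOn (g1TV κ τ) (Ioi 0) :=
  continuousOn_const.div (continuousOn_const.mul (continuousOn_comp_one_div hκ))
    fun _ hx => (mul_pos hτ (hκ_pos _ (one_div_pos.2 hx))).ne'

theorem continuousOn_g2TV (hκ : ContinuousOn κ (Ioi 0)) (hκ_pos : ∀ ρ, 0 < ρ → 0 < κ ρ)
    (hτ : 0 < τ) : ContinuousOn (g2TV κ τ) (Ioi 0) :=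
  continuousOn_id.div (continuousOn_const.mul (continuousOn_comp_one_div hκ))
    fun _ hx => (mul_pos (mul_pos two_pos hτ) (hκ_pos _ (one_div_pos.2 hx))).ne'

theorem g2TV_pos (hκ_pos : ∀ ρ, 0 < ρ → 0 < κ ρ) (hτ : 0 < τ) {x : ℝ} (hx : 0 < x) :
    0 < g2TV κ τ x :=
  div_pos hx (mul_pos (mul_pos two_pos hτ) (hκ_pos _ (one_div_pos.2 hx)))

theorem exists_hTV_ne_zero {s : Set ℝ} (hK : K ≠ 0) (hV' : (V' '' s).Nontrivial) (μ : ℝ) :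
    ∃ x ∈ s, hTV V' K μ x ≠ 0 := by
  by_contra! hzero
  have hV'_eq : ∀ x ∈ s, V' x = K + K * μ := fun x hx => by
    have := hzero x hx
    unfold hTV fdTV at this
    field_simp at this
    linarith
  obtain ⟨_, ⟨x, hx, rfl⟩, _, ⟨y, hy, rfl⟩, hxy⟩ := hV'
  exact hxy ((hV'_eq x hx).trans (hV'_eq y hy).symm)

theorem A1.hasDerivAt (h : A1 V V' V'' UM) {x : ℝ} (hx : 0 < x) : HasDerivAt V (V' x) x :=
  (h.1 x hx.le).hasDerivAt (Ici_mem_nhds hx)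

theorem A1.nontrivial_image_Ioo (h : A1 V V' V'' UM) {a b : ℝ} (ha : 0 ≤ a) (hab : a < b) :
    (V' '' Ioo a b).Nontrivial := by
  obtain ⟨-, -, hV'', -, -, -, -, -, -, hUM⟩ := h
  obtain ⟨x, hx, hxUM⟩ := (Ioo_infinite hab).nontrivial.exists_ne UM
  have hx0 : 0 < x := ha.trans_lt hx.1
  exact nontrivial_image_of_hasDerivAt_ne_zero (Ioo_mem_nhds hx.1 hx.2) (hV'' x hx0)
    (mt (hUM x hx0).1 hxUM)

theorem IsTVSol.exists_hTV_neg_and_exists_hTV_pos (hV : ContinuousOn V (Ioi 0))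
    (hV' : ContinuousOn V' (Ioi 0))
    (hV'_nontrivial : ∀ ⦃a b⦄, 0 ≤ a → a < b → (V' '' Ioo a b).Nontrivial)
    (hκ : ContinuousOn κ (Ioi 0)) (hκ_pos : ∀ ρ, 0 < ρ → 0 < κ ρ) (hτ : 0 < τ) (hK : K ≠ 0)
    (hub : 0 < ub) (hsol : IsTVSol V V' κ τ K c μ u w) (hpos : ∀ z, 0 < u z) (hHO : HO ub u w) :
    (∃ a ∈ Ioo (sInf (range u)) (sSup (range u)), hTV V' K μ a < 0) ∧
      ∃ b ∈ Ioo (sInf (range u)) (sSup (range u)), 0 < hTV V' K μ b := by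
  have hbdd := isBounded_range_of_tendsto_cocompact hsol.isLienardSol.continuous_fst
    hHO.tendsto_fst_cocompact
  have hinf : 0 ≤ sInf (range u) := Real.sInf_nonneg (forall_mem_range.2 fun z => (hpos z).le)
  have hg2 : ∀ x ∈ Ioo (sInf (range u)) (sSup (range u)), 0 < g2TV κ τ x :=
    fun x hx => g2TV_pos hκ_pos hτ (hinf.trans_lt hx.1)
  have hlt : sInf (range u) < sSup (range u) := by
    obtain ⟨z, hz⟩ := hHO.exists_ne_zero hsol.1
    have hmem := mem_Ioo_sInf_sSup_range_of_hasDerivAt_ne_zero hbdd.bddBelow hbdd.bddAbove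
      (hsol.1 z) hz
    exact hmem.1.trans hmem.2
  obtain ⟨x, hx, hhx⟩ := exists_hTV_ne_zero hK (hV'_nontrivial hinf hlt) μ
  obtain ⟨⟨a, ha, hQa⟩, b, hb, hQb⟩ := hsol.isLienardSol.exists_neg_and_exists_pos isOpen_Ioi
    ordConnected_Ioi ((continuousOn_g1TV hκ hκ_pos hτ).mul (continuousOn_fTV hV K c))
    ((continuousOn_g2TV hκ hκ_pos hτ).mul ((continuousOn_fdTV hV' K).add continuousOn_const))
    hpos hub hHO.tendsto_fst_cocompact hHO.tendsto_snd_cocompact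
    ⟨x, hx, mul_ne_zero (hg2 x hx).ne' hhx⟩
  exact ⟨⟨a, ha, neg_of_mul_neg_right hQa (hg2 a ha).le⟩,
    b, hb, pos_of_mul_pos_right hQb (hg2 b hb).le⟩

theorem stmt16_general (hV : ∀ x, 0 < x → HasDerivAt V (V' x) x) (hV' : ContinuousOn V' (Ioi 0))
    (hV'_nontrivial : ∀ ⦃a b⦄, 0 ≤ a → a < b → (V' '' Ioo a b).Nontrivial)
    (hκ : ContinuousOn κ (Ioi 0)) (hκ_pos : ∀ ρ, 0 < ρ → 0 < κ ρ) (hτ : 0 < τ) (hK : K ≠ 0)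
    (hub : 0 < ub) (hsol : IsTVSol V V' κ τ K c μ u w) (hpos : ∀ z, 0 < u z) (hHO : HO ub u w) :
    (- sSup (fdTV V' K '' Ioo (sInf (range u)) (sSup (range u))) < μ ∧
      μ < - sInf (fdTV V' K '' Ioo (sInf (range u)) (sSup (range u)))) ∧
    (∃ a ∈ Ioo (sInf (range u)) (sSup (range u)), hTV V' K μ a < 0) ∧
    (∃ b ∈ Ioo (sInf (range u)) (sSup (range u)), 0 < hTV V' K μ b) := by
  have hfd := isBounded_fdTV_image_Ioo hV' K hsol.isLienardSol.continuous_fst hpos hub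
    hHO.tendsto_fst_cocompact
  obtain ⟨⟨a, ha, hna⟩, b, hb, hpb⟩ := hsol.exists_hTV_neg_and_exists_hTV_pos
    (HasDerivAt.continuousOn hV) hV' hV'_nontrivial hκ hκ_pos hτ hK hub hpos hHO
  have hsup := le_csSup hfd.bddAbove (mem_image_of_mem (fdTV V' K) hb)
  have hinf := csInf_le hfd.bddBelow (mem_image_of_mem (fdTV V' K) ha)
  refine ⟨⟨?_, ?_⟩, ⟨a, ha, hna⟩, b, hb, hpb⟩ <;> unfold hTV at hna hpb <;> linarith

end TravelingWave

theorem stmt16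
    (V V' V'' κ : ℝ → ℝ) (τ UM K c K₁ : ℝ) (uMx umx : ℝ → ℝ)
    (hA1 : A1 V V' V'' UM) (hA2 : A2 κ) (hτ : 0 < τ) (hK : K ≠ 0)
    (huMx : UMaxHyp V' UM uMx) (humx : UMinHyp V' UM umx)
    (hK1 : K1Hyp V V' UM umx K₁)
    (ub μ : ℝ) (u w : ℝ → ℝ)
    (hub : ((K, c) ∈ D1 V V' UM uMx umx ∧
        ∃ u1 u0 u2, ZerosD1 V K c u1 u0 u2 ∧ (ub = u1 ∨ ub = u2)) ∨
      ((K, c) ∈ D2 V V' umx K₁ ∧ ∃ u0 u2, ZerosD2 V K c u0 u2 ∧ ub = u2))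
    (hsol : IsTVSol V V' κ τ K c μ u w) (hpos : ∀ z, 0 < u z) (hHO : HO ub u w) :
    (- sSup (fdTV V' K '' Ioo (sInf (range u)) (sSup (range u))) < μ ∧
      μ < - sInf (fdTV V' K '' Ioo (sInf (range u)) (sSup (range u)))) ∧
    (∃ a ∈ Ioo (sInf (range u)) (sSup (range u)), hTV V' K μ a < 0) ∧
    (∃ b ∈ Ioo (sInf (range u)) (sSup (range u)), 0 < hTV V' K μ b) := by
  have hub_pos : 0 < ub := by
    rcases hub with ⟨-, u1, u0, u2, ⟨h1, h10, h02, -⟩, rfl | rfl⟩ | ⟨-, u0, u2, ⟨h0, h02, -⟩, rfl⟩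
      <;> linarith
  exact stmt16_general (fun _ => hA1.hasDerivAt) (hA1.2.1.mono Ioi_subset_Ici_self)
    (fun _ _ => hA1.nontrivial_image_Ioo) hA2.1.continuousOn hA2.2 hτ hK hub_pos hsol hpos hHO

end TrafficTW
end
end
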